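/- For integers m and l with 1 ≤ l ≤ m, the normalized associated Legendre function satisfies 1/√(2.22(l+1)) < max_{x∈[−1,1]} |√((m−l)!/(m+l)!) P_m^l(x)| < 2^{5/4} π^{−3/4} l^{−1/4}. -/

import Mathlib

open Real

/-- The Legendre polynomial `P_m`, via the Rodrigues formula. -/
noncomputable def legendreP (m : ℕ) (x : ℝ) : ℝ :=
  (1 / (2 ^ m * m.factorial)) * iteratedDeriv m (fun y : ℝ => (y ^ 2 - 1) ^ m) x

/-- The associated Legendre function
`P_m^l(x) = (1-x²)^{l/2} (d/dx)^l P_m(x)`. -/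
noncomputable def assocLegendreP (m l : ℕ) (x : ℝ) : ℝ :=
  (Real.sqrt (1 - x ^ 2)) ^ l * iteratedDeriv l (legendreP m) x


/-- Sonin argument with WKB weight. -/
theorem sonin_up (Y Z : ℝ → ℝ) (M L x0 : ℝ) (h0 : 0 ≤ x0) (h1 : x0 < 1) (hM : 0 < M)
    (hQ : 0 < M * (1 - x0 ^ 2) - L ^ 2)
    (hY : ∀ x ∈ Set.Icc 0 x0, HasDerivAt Y (Z x / (1 - x ^ 2)) x)
    (hZ : ∀ x ∈ Set.Icc 0 x0, HasDerivAt Z (-(M * (1 - x ^ 2) - L ^ 2) * Y x / (1 - x ^ 2)) x) :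
    √(M * (1 - x0 ^ 2) - L ^ 2) * Y x0 ^ 2 ≤ √(M - L ^ 2) * Y 0 ^ 2 + Z 0 ^ 2 / √(M - L ^ 2) := by
  set r : ℝ → ℝ := fun x => √(√(M * (1 - x ^ 2) - L ^ 2)) with hr
  set q : ℝ → ℝ := fun x => 1 + M * (1 - x ^ 2) *
    (M * (1 - x ^ 2) + M * (1 - x ^ 2) ^ 2 + (4 - 6 * (1 - x ^ 2)) * L ^ 2) /
      (4 * (M * (1 - x ^ 2) - L ^ 2) ^ 3) with hq
  set w : ℝ → ℝ := fun x => r x * Y x with hw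
  set w1 : ℝ → ℝ := fun x =>
    (Z x - 2 * M * (1 - x ^ 2) * x * Y x / (4 * (M * (1 - x ^ 2) - L ^ 2))) / r x with hw1
  have hv : ∀ x ∈ Set.Icc 0 x0, 0 < 1 - x ^ 2 := by
    rintro x ⟨a, b⟩; nlinarith
  have hQx : ∀ x ∈ Set.Icc 0 x0, 0 < M * (1 - x ^ 2) - L ^ 2 := by
    rintro x ⟨a, b⟩
    have : x ^ 2 ≤ x0 ^ 2 := by gcongr
    nlinarith
  have hrp : ∀ x ∈ Set.Icc 0 x0, 0 < r x := fun x hx => sqrt_pos.2 (sqrt_pos.2 (hQx x hx))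
  have hr2 : ∀ x, r x ^ 2 = √(M * (1 - x ^ 2) - L ^ 2) := fun x => sq_sqrt (sqrt_nonneg _)
  have hr4 : ∀ x ∈ Set.Icc 0 x0, r x ^ 4 = M * (1 - x ^ 2) - L ^ 2 := by
    intro x hx
    have := hQx x hx
    calc r x ^ 4 = (r x ^ 2) ^ 2 := by ring
      _ = _ := by rw [hr2 x, sq_sqrt this.le]
  have hQd : ∀ x : ℝ, HasDerivAt (fun x : ℝ => M * (1 - x ^ 2) - L ^ 2) (-2 * M * x) x := by
    intro x
    have := (((hasDerivAt_pow 2 x).const_sub 1).const_mul M).sub_const (L ^ 2)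
    exact this.congr_deriv (by simp; ring)
  have hrd : ∀ x ∈ Set.Icc 0 x0, HasDerivAt r (-2 * M * x / (4 * r x ^ 3)) x := by
    intro x hx
    have h1 := ((hQd x).sqrt (hQx x hx).ne').sqrt (sqrt_pos.2 (hQx x hx)).ne'
    convert h1 using 1
    have e : √(M * (1 - x ^ 2) - L ^ 2) = r x ^ 2 := (hr2 x).symm
    rw [e, sqrt_sq (hrp x hx).le]
    have := (hrp x hx).ne'
    field_simp; norm_num; ring
  have hwd : ∀ x ∈ Set.Icc 0 x0, HasDerivAt w (r x ^ 2 * w1 x / (1 - x ^ 2)) x := by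
    intro x hx
    have h1 := (hrd x hx).mul (hY x hx)
    refine h1.congr_deriv ?_
    rw [hw1]; simp only; rw [← hr4 x hx]
    have := (hrp x hx).ne'
    have := (hv x hx).ne'
    field_simp; ring
  have hw1d : ∀ x ∈ Set.Icc 0 x0, HasDerivAt w1 (-(r x ^ 2 * q x * w x / (1 - x ^ 2))) x := by
    intro x hx
    have hQ' := (hQx x hx).ne'
    have hrr := (hrp x hx).ne'
    have hvv := (hv x hx).ne'
    have hvd : HasDerivAt (fun x : ℝ => 2 * M * (1 - x ^ 2) * x) (2 * M * (1 - 3 * x ^ 2)) x := by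
      have := (((hasDerivAt_pow 2 x).const_sub 1).const_mul (2 * M)).mul (hasDerivAt_id x)
      exact this.congr_deriv (by simp; ring)
    have h1 := (((hZ x hx).sub ((hvd.mul (hY x hx)).div ((hQd x).const_mul 4)
      (by positivity))).div (hrd x hx) hrr)
    refine h1.congr_deriv ?_
    simp only [Pi.mul_apply, Pi.sub_apply, Pi.div_apply, hq, hw]
    have e := hr4 x hx
    have eL : L ^ 2 = M * (1 - x ^ 2) - r x ^ 4 := by linarith
    rw [← e, eL]
    generalize r x = R at *
    field_simp
    ring
  have hqd : ∀ x ∈ Set.Icc 0 x0, ∃ q', 0 ≤ q' ∧ HasDerivAt q q' x := by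
    intro x hx
    have hQ' := (hQx x hx)
    have hvv := (hv x hx)
    have hvd : HasDerivAt (fun x : ℝ => (1 - x ^ 2)) (-2 * x) x := by
      have := ((hasDerivAt_pow 2 x).const_sub 1)
      exact this.congr_deriv (by simp)
    have h1 := ((((hvd.const_mul M).mul (((hvd.const_mul M).add ((hvd.pow 2).const_mul M)).add
      (((hvd.const_mul 6).const_sub 4).mul_const (L ^ 2))))).div (((hQd x).pow 3).const_mul 4)
      (by simp only [Pi.pow_apply]; positivity)).const_add 1
    refine ⟨_, ?_, h1⟩
    simp only [Pi.mul_apply, Pi.add_apply, Pi.pow_apply]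
    apply div_nonneg _ (by positivity)
    have hx0 : 0 ≤ x := hx.1
    have hv1 : 1 - x ^ 2 ≤ 1 := by nlinarith
    have key : ∀ v a : ℝ, 0 < v → v ≤ 1 → 0 ≤ a → a < M * v →
      0 ≤ M * M * v ^ 2 + 10 * a * M * v - 3 * a * M * v ^ 2 + 4 * a ^ 2 - 12 * a ^ 2 * v := by
      intro v a hv hv1 ha hav
      have h1 : 0 ≤ (1 - v) * a := mul_nonneg (by linarith) ha
      have h2 : 0 ≤ (M * v - a) := by linarith
      have h3 : 0 ≤ (1 - v) * a * (M * v) := mul_nonneg h1 (by positivity)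
      have h4 : 0 ≤ (1 - v) * a * a := mul_nonneg h1 ha
      have h5 : 0 ≤ (M * v - a) * a := mul_nonneg h2 ha
      have h6 : 0 ≤ (M * v - a) * (M * v - a) := mul_nonneg h2 h2
      nlinarith [h3, h4, h5, h6]
    have hk := key (1 - x ^ 2) (L ^ 2) hvv hv1 (sq_nonneg _) (by linarith)
    have : 0 ≤ 8 * x * M * (M * (1 - x ^ 2) - L ^ 2) ^ 2 * (M * M * (1 - x ^ 2) ^ 2 + 10 * L ^ 2 * M * (1 - x ^ 2) - 3 * L ^ 2 * M * (1 - x ^ 2) ^ 2 + 4 * (L ^ 2) ^ 2 - 12 * (L ^ 2) ^ 2 * (1 - x ^ 2)) := by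
      apply mul_nonneg _ hk; positivity
    refine this.trans_eq ?_
    push_cast
    norm_num
    ring
  have hqp : ∀ x ∈ Set.Icc 0 x0, 1 ≤ q x := by
    intro x hx
    have hQ' := (hQx x hx)
    have hvv := (hv x hx)
    have hv1 : 1 - x ^ 2 ≤ 1 := by nlinarith
    simp only [hq]
    have : 0 ≤ (M * (1 - x ^ 2) + M * (1 - x ^ 2) ^ 2 + (4 - 6 * (1 - x ^ 2)) * L ^ 2) := by
      generalize 1 - x ^ 2 = v at *
      have h3 : 0 ≤ (1 - v) * (M * v) := mul_nonneg (by linarith) (by positivity)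
      have h4 : 0 ≤ (1 - v) * L ^ 2 := mul_nonneg (by linarith) (by positivity)
      have h5 : 0 ≤ v * (M * v - L ^ 2) := by positivity
      nlinarith
    have : 0 ≤ M * (1 - x ^ 2) *
      (M * (1 - x ^ 2) + M * (1 - x ^ 2) ^ 2 + (4 - 6 * (1 - x ^ 2)) * L ^ 2) /
      (4 * (M * (1 - x ^ 2) - L ^ 2) ^ 3) := by positivity
    linarith
  have hS : ∀ x ∈ Set.Icc 0 x0, ∃ s', s' ≤ 0 ∧
      HasDerivAt (fun x => w x ^ 2 + w1 x ^ 2 / q x) s' x := by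
    intro x hx
    obtain ⟨q', hq0, hq'⟩ := hqd x hx
    have hq1 : 0 < q x := by linarith [hqp x hx]
    have h := ((hwd x hx).pow 2).add (((hw1d x hx).pow 2).div hq' hq1.ne')
    refine ⟨-(w1 x ^ 2 * q' / q x ^ 2), by
      have : 0 ≤ w1 x ^ 2 * q' / q x ^ 2 := by positivity
      linarith, ?_⟩
    refine h.congr_deriv ?_
    have := (hv x hx).ne'
    simp only [Pi.pow_apply]
    field_simp
    push_cast
    ring
  have anti : AntitoneOn (fun x => w x ^ 2 + w1 x ^ 2 / q x) (Set.Icc 0 x0) := by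
    apply antitoneOn_of_deriv_nonpos (convex_Icc _ _)
    · intro x hx
      obtain ⟨s, _, hs⟩ := hS x hx
      exact hs.continuousAt.continuousWithinAt
    · intro x hx
      obtain ⟨s, _, hs⟩ := hS x (interior_subset hx)
      exact hs.differentiableAt.differentiableWithinAt
    · intro x hx
      obtain ⟨s, h, hs⟩ := hS x (interior_subset hx)
      rw [hs.deriv]; exact h
  have m0 : (0:ℝ) ∈ Set.Icc 0 x0 := ⟨le_rfl, h0⟩
  have m1 : x0 ∈ Set.Icc 0 x0 := ⟨h0, le_rfl⟩
  have hfin := anti m0 m1 h0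
  simp only at hfin
  have a1 : √(M * (1 - x0 ^ 2) - L ^ 2) * Y x0 ^ 2 = w x0 ^ 2 := by
    rw [← hr2 x0]; simp only [hw]; ring
  have a2 : 0 ≤ w1 x0 ^ 2 / q x0 := by
    have := hqp x0 m1; positivity
  have e0 : √(M - L ^ 2) = r 0 ^ 2 := by rw [hr2]; simp
  have a3 : w1 0 ^ 2 / q 0 ≤ Z 0 ^ 2 / √(M - L ^ 2) := by
    rw [e0]
    have : w1 0 ^ 2 = Z 0 ^ 2 / r 0 ^ 2 := by simp only [hw1]; simp [div_pow]
    rw [this]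
    have := hqp 0 m0
    apply div_le_self (by positivity) this
  rw [a1]
  rw [e0] at a3 ⊢
  have : w 0 ^ 2 = r 0 ^ 2 * Y 0 ^ 2 := by simp only [hw]; ring
  linarith

theorem sonin_low (Y Z : ℝ → ℝ) (M L x0 : ℝ) (h0 : 0 ≤ x0) (h1 : x0 < 1)
    (hL : 1 ≤ L) (hQ : 0 ≤ M * (1 - x0 ^ 2) - L ^ 2)
    (hY : ∀ x ∈ Set.Icc 0 x0, HasDerivAt Y (Z x / (1 - x ^ 2)) x)
    (hZ : ∀ x ∈ Set.Icc 0 x0, HasDerivAt Z (-(M * (1 - x ^ 2) - L ^ 2) * Y x / (1 - x ^ 2)) x)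
    (hc : Z x0 = 0) :
    Y 0 ^ 2 + Z 0 ^ 2 / (M - L ^ 2 + 1 / 2) ≤ √(1 - x0 ^ 2) * Y x0 ^ 2 *
      (1 + x0 ^ 2 / (4 * (M * (1 - x0 ^ 2) - L ^ 2) + (1 - x0 ^ 2) + 1)) := by
  set r : ℝ → ℝ := fun x => √(√(1 - x ^ 2)) with hr
  set q : ℝ → ℝ := fun x => M + 1 / 4 - (L ^ 2 - 1 / 4) / (1 - x ^ 2) with hq
  set w : ℝ → ℝ := fun x => r x * Y x with hw
  set w1 : ℝ → ℝ := fun x => (Z x - x * Y x / 2) / r x with hw1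
  have hv : ∀ x ∈ Set.Icc 0 x0, 0 < 1 - x ^ 2 := by
    rintro x ⟨a, b⟩; nlinarith
  have hv0 : 0 < 1 - x0 ^ 2 := hv x0 ⟨h0, le_rfl⟩
  have hM : 0 < M := by
    by_contra h
    push Not at h
    nlinarith
  have hQx : ∀ x ∈ Set.Icc 0 x0, 0 ≤ M * (1 - x ^ 2) - L ^ 2 := by
    rintro x ⟨a, b⟩
    have : x ^ 2 ≤ x0 ^ 2 := by gcongr
    nlinarith
  have hrp : ∀ x ∈ Set.Icc 0 x0, 0 < r x := fun x hx => sqrt_pos.2 (sqrt_pos.2 (hv x hx))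
  have hr2 : ∀ x, r x ^ 2 = √(1 - x ^ 2) := fun x => sq_sqrt (sqrt_nonneg _)
  have hr4 : ∀ x ∈ Set.Icc 0 x0, r x ^ 4 = 1 - x ^ 2 := by
    intro x hx
    have := hv x hx
    calc r x ^ 4 = (r x ^ 2) ^ 2 := by ring
      _ = _ := by rw [hr2 x, sq_sqrt this.le]
  have hQd : ∀ x : ℝ, HasDerivAt (fun x : ℝ => 1 - x ^ 2) (-2 * x) x := by
    intro x
    have := ((hasDerivAt_pow 2 x).const_sub 1)
    exact this.congr_deriv (by simp)
  have hrd : ∀ x ∈ Set.Icc 0 x0, HasDerivAt r (-2 * x / (4 * r x ^ 3)) x := by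
    intro x hx
    have h1 := ((hQd x).sqrt (hv x hx).ne').sqrt (sqrt_pos.2 (hv x hx)).ne'
    convert h1 using 1
    have e : √(1 - x ^ 2) = r x ^ 2 := (hr2 x).symm
    rw [e, sqrt_sq (hrp x hx).le]
    have := (hrp x hx).ne'
    field_simp; norm_num; ring
  have hwd : ∀ x ∈ Set.Icc 0 x0, HasDerivAt w (w1 x / r x ^ 2) x := by
    intro x hx
    have h1 := (hrd x hx).mul (hY x hx)
    refine h1.congr_deriv ?_
    rw [hw1]; simp only; rw [← hr4 x hx]
    have := (hrp x hx).ne'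
    field_simp; ring
  have hw1d : ∀ x ∈ Set.Icc 0 x0, HasDerivAt w1 (-(q x * w x / r x ^ 2)) x := by
    intro x hx
    have hrr := (hrp x hx).ne'
    have h1 := (((hZ x hx).sub (((hasDerivAt_id x).mul (hY x hx)).div_const 2)).div (hrd x hx) hrr)
    refine h1.congr_deriv ?_
    simp only [Pi.mul_apply, Pi.sub_apply, Pi.div_apply, hq, hw, id]
    have e := hr4 x hx
    rw [← e]
    have eL : x ^ 2 = 1 - r x ^ 4 := by linarith
    generalize r x = R at *
    field_simp
    ring_nf
    rw [eL]
    ring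
  have hqp : ∀ x ∈ Set.Icc 0 x0, 0 < q x := by
    intro x hx
    have hQ' := (hQx x hx)
    have hvv := (hv x hx)
    simp only [hq]
    have : (L ^ 2 - 1 / 4) / (1 - x ^ 2) < M + 1 / 4 := by
      rw [div_lt_iff₀ hvv]; nlinarith
    linarith
  have hqd : ∀ x ∈ Set.Icc 0 x0, ∃ q', q' ≤ 0 ∧ HasDerivAt q q' x := by
    intro x hx
    have hvv := (hv x hx)
    have h1 := ((hasDerivAt_const x (L ^ 2 - 1 / 4)).div (hQd x) hvv.ne').const_sub (M + 1 / 4)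
    refine ⟨_, ?_, h1⟩
    have : 0 ≤ (0 * (1 - x ^ 2) - (L ^ 2 - 1 / 4) * (-2 * x)) / (1 - x ^ 2) ^ 2 := by
      apply div_nonneg _ (by positivity)
      have : 0 ≤ (L ^ 2 - 1 / 4) * x := mul_nonneg (by nlinarith) hx.1
      nlinarith
    linarith
  have hS : ∀ x ∈ Set.Icc 0 x0, ∃ s', 0 ≤ s' ∧
      HasDerivAt (fun x => w x ^ 2 + w1 x ^ 2 / q x) s' x := by
    intro x hx
    obtain ⟨q', hq0, hq'⟩ := hqd x hx
    have hq1 : 0 < q x := hqp x hx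
    have h := ((hwd x hx).pow 2).add (((hw1d x hx).pow 2).div hq' hq1.ne')
    refine ⟨w1 x ^ 2 * (-q') / q x ^ 2, by
      have : 0 ≤ -q' := by linarith
      positivity, ?_⟩
    refine h.congr_deriv ?_
    have := (hrp x hx).ne'
    simp only [Pi.pow_apply]
    field_simp
    push_cast
    ring
  have anti : MonotoneOn (fun x => w x ^ 2 + w1 x ^ 2 / q x) (Set.Icc 0 x0) := by
    apply monotoneOn_of_deriv_nonneg (convex_Icc _ _)
    · intro x hx
      obtain ⟨s, _, hs⟩ := hS x hx
      exact hs.continuousAt.continuousWithinAt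
    · intro x hx
      obtain ⟨s, _, hs⟩ := hS x (interior_subset hx)
      exact hs.differentiableAt.differentiableWithinAt
    · intro x hx
      obtain ⟨s, h, hs⟩ := hS x (interior_subset hx)
      rw [hs.deriv]; exact h
  have m0 : (0:ℝ) ∈ Set.Icc 0 x0 := ⟨le_rfl, h0⟩
  have m1 : x0 ∈ Set.Icc 0 x0 := ⟨h0, le_rfl⟩
  have hfin := anti m0 m1 h0
  simp only at hfin
  refine le_trans (le_of_eq ?_) (hfin.trans (le_of_eq ?_))
  · simp only [hw, hw1, hq, hr]
    norm_num
    congr 1; ring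
  · simp only [hw, hw1, hq, hc]
    rw [← hr2 x0]
    have e := hr4 x0 m1
    have hR := hrp x0 m1
    have hq0 := hqp x0 m1
    have hQ0 := hQx x0 m1
    simp only [hq] at hq0
    have e2 : M + 1 / 4 - (L ^ 2 - 1 / 4) / (1 - x0 ^ 2) =
      (4 * (M * (1 - x0 ^ 2) - L ^ 2) + (1 - x0 ^ 2) + 1) / (4 * (1 - x0 ^ 2)) := by
      field_simp; ring
    rw [e2]
    have : 0 < 4 * (M * (1 - x0 ^ 2) - L ^ 2) + (1 - x0 ^ 2) + 1 := by linarith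
    generalize 4 * (M * (1 - x0 ^ 2) - L ^ 2) + (1 - x0 ^ 2) + 1 = D at *
    rw [← e]
    generalize r x0 = R at *
    field_simp
    ring

theorem hd_v (x : ℝ) : HasDerivAt (fun x : ℝ => 1 - x ^ 2) (-2 * x) x := by
  have := ((hasDerivAt_pow 2 x).const_sub 1)
  exact this.congr_deriv (by simp)

theorem hd_vpow (n : ℕ) (x : ℝ) :
    HasDerivAt (fun x : ℝ => (1 - x ^ 2) ^ (n + 1)) (-2 * (n + 1) * x * (1 - x ^ 2) ^ n) x := by
  have := (hd_v x).pow (n + 1)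
  exact this.congr_deriv (by push_cast; simp; ring)

/-- The derivative of the flux, using the differential equation. -/
theorem hd_flux (u u1 u2 : ℝ → ℝ) (l : ℕ) (A : ℝ)
    (h2 : ∀ x, HasDerivAt u1 (u2 x) x)
    (ode : ∀ x, (1 - x ^ 2) * u2 x - 2 * (l + 1) * x * u1 x + A * u x = 0) (x : ℝ) :
    HasDerivAt (fun x => (1 - x ^ 2) ^ (l + 1) * u1 x) (-A * (1 - x ^ 2) ^ l * u x) x := by
  have := (hd_vpow l x).mul (h2 x)
  refine this.congr_deriv ?_
  have h := ode x
  have : u x * A = 2 * (l + 1) * x * u1 x - (1 - x ^ 2) * u2 x := by linarith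
  calc _ = (1 - x ^ 2) ^ l * ((1 - x ^ 2) * u2 x - 2 * (l + 1) * x * u1 x) := by ring
    _ = (1 - x ^ 2) ^ l * (-(u x * A)) := by rw [this]; ring
    _ = _ := by ring

theorem Q_ge_pos (u u1 u2 : ℝ → ℝ) (l : ℕ) (A x0 : ℝ) (hA : 0 ≤ A)
    (h2 : ∀ x, HasDerivAt u1 (u2 x) x)
    (ode : ∀ x, (1 - x ^ 2) * u2 x - 2 * (l + 1) * x * u1 x + A * u x = 0)
    (h0 : 0 < x0) (hx1 : x0 < 1) (hu : 0 < u x0)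
    (hc : (1 - x0 ^ 2) * u1 x0 = l * x0 * u x0)
    (hmax : ∀ x ∈ Set.Icc x0 1, (1 - x ^ 2) ^ l * u x ^ 2 ≤ (1 - x0 ^ 2) ^ l * u x0 ^ 2) :
    l * (l + 2) * x0 ^ 2 ≤ A * (1 - x0 ^ 2) := by
  set s : ℝ → ℝ := fun x => √(1 - x ^ 2) with hs
  have hv0 : 0 < 1 - x0 ^ 2 := by nlinarith
  have hs0 : 0 < s x0 := sqrt_pos.2 hv0
  have hs2 : ∀ x ∈ Set.Icc x0 1, s x ^ 2 = 1 - x ^ 2 := by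
    rintro x ⟨a, b⟩
    exact sq_sqrt (by nlinarith)
  set C := A * (s x0 ^ l * u x0) / ((l + 2) * x0) with hC
  have hC0 : 0 ≤ C := by positivity
  have mono : MonotoneOn (fun x => (1 - x ^ 2) ^ (l + 1) * u1 x - C * s x ^ (l + 2))
      (Set.Icc x0 1) := by
    have hd : ∀ x ∈ interior (Set.Icc x0 1),
        HasDerivAt (fun x => (1 - x ^ 2) ^ (l + 1) * u1 x - C * s x ^ (l + 2))
          (-A * (1 - x ^ 2) ^ l * u x + C * ((l + 2) * x * s x ^ l)) x := by
      intro x hx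
      rw [interior_Icc] at hx
      have hv : 0 < 1 - x ^ 2 := by nlinarith [hx.1, hx.2]
      have hsd := (hd_v x).sqrt hv.ne'
      have hsx : 0 < s x := sqrt_pos.2 hv
      have := (hd_flux u u1 u2 l A h2 ode x).sub ((hsd.pow (l + 2)).const_mul C)
      refine this.congr_deriv ?_
      change _ - C * (((l + 2 : ℕ) : ℝ) * s x ^ (l + 2 - 1) * (-2 * x / (2 * s x))) = _
      have : l + 2 - 1 = l + 1 := rfl
      rw [this]
      push_cast
      field_simp
      ring
    apply monotoneOn_of_deriv_nonneg (convex_Icc _ _)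
    · apply ContinuousOn.sub
      · intro x _
        exact (hd_flux u u1 u2 l A h2 ode x).continuousAt.continuousWithinAt
      · apply Continuous.continuousOn
        simp only [hs]; fun_prop
    · intro x hx
      exact (hd x hx).differentiableAt.differentiableWithinAt
    · intro x hx
      rw [(hd x hx).deriv]
      have hx' := interior_subset hx
      have hsx : 0 ≤ s x := sqrt_nonneg _
      have hb : s x ^ l * u x ≤ s x0 ^ l * u x0 := by
        refine (abs_le_of_sq_le_sq' ?_ (by positivity)).2
        have := hmax x hx'
        rw [← hs2 x hx', ← hs2 x0 ⟨le_rfl, hx1.le⟩] at this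
        calc _ = (s x ^ 2) ^ l * u x ^ 2 := by ring
          _ ≤ _ := this
          _ = _ := by ring
      have e1 : A * (1 - x ^ 2) ^ l * u x = A * s x ^ l * (s x ^ l * u x) := by
        rw [← hs2 x hx']; ring
      have e2 : C * ((l + 2) * x * s x ^ l) = A * s x ^ l * (s x0 ^ l * u x0) * (x / x0) := by
        rw [hC]; field_simp
      have e3 : 1 ≤ x / x0 := by rw [le_div_iff₀ h0]; linarith [hx'.1]
      have e4 : A * s x ^ l * (s x ^ l * u x) ≤ A * s x ^ l * (s x0 ^ l * u x0) := by gcongr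
      have e5 : A * s x ^ l * (s x0 ^ l * u x0) ≤ A * s x ^ l * (s x0 ^ l * u x0) * (x / x0) := 
        le_mul_of_one_le_right (by positivity) e3
      rw [e2]
      linarith
  have hf := mono (Set.left_mem_Icc.2 hx1.le) (Set.right_mem_Icc.2 hx1.le) hx1.le
  simp only at hf
  have hs1 : s 1 = 0 := by simp [hs]
  rw [hs1] at hf
  norm_num at hf
  have e6 : C * s x0 ^ (l + 2) = A * (1 - x0 ^ 2) ^ l * u x0 * (1 - x0 ^ 2) / ((l + 2) * x0) := by
    rw [hC, ← hs2 x0 ⟨le_rfl, hx1.le⟩]; field_simp; ring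
  have e7 : (1 - x0 ^ 2) ^ (l + 1) * u1 x0 = (1 - x0 ^ 2) ^ l * (l * x0 * u x0) := by
    rw [← hc]; ring
  rw [e6, e7, le_div_iff₀ (by positivity)] at hf
  have hP : 0 < (1 - x0 ^ 2) ^ l * u x0 := by positivity
  refine le_of_mul_le_mul_left ?_ hP
  linarith

theorem Q_ge (u u1 u2 : ℝ → ℝ) (l : ℕ) (A x0 : ℝ) (hA : 0 ≤ A)
    (h2 : ∀ x, HasDerivAt u1 (u2 x) x)
    (ode : ∀ x, (1 - x ^ 2) * u2 x - 2 * (l + 1) * x * u1 x + A * u x = 0)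
    (h0 : 0 < x0) (hx1 : x0 < 1) (hu : u x0 ≠ 0)
    (hc : (1 - x0 ^ 2) * u1 x0 = l * x0 * u x0)
    (hmax : ∀ x ∈ Set.Icc x0 1, (1 - x ^ 2) ^ l * u x ^ 2 ≤ (1 - x0 ^ 2) ^ l * u x0 ^ 2) :
    l * (l + 2) * x0 ^ 2 ≤ A * (1 - x0 ^ 2) := by
  rcases lt_or_gt_of_ne hu with h | h
  · apply Q_ge_pos (fun x => -u x) (fun x => -u1 x) (fun x => -u2 x) l A x0 hA
      (fun x => (h2 x).neg) (fun x => by linarith [ode x]) h0 hx1 (by simpa using h)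
      (by linarith) (by simpa using hmax)
  · exact Q_ge_pos u u1 u2 l A x0 hA h2 ode h0 hx1 h hc hmax

/-- derivative of `(1-x²)^l u²` vanishes at an interior local max. -/
theorem crit_of_max (u u1 : ℝ → ℝ) (l : ℕ) (hl : 1 ≤ l) (a b x0 : ℝ)
    (h1 : ∀ x, HasDerivAt u (u1 x) x) (hx : x0 ∈ Set.Ioo a b) (hv : 0 < 1 - x0 ^ 2)
    (hu : u x0 ≠ 0)
    (hmax : ∀ x ∈ Set.Ioo a b, (1 - x ^ 2) ^ l * u x ^ 2 ≤ (1 - x0 ^ 2) ^ l * u x0 ^ 2) :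
    (1 - x0 ^ 2) * u1 x0 = l * x0 * u x0 := by
  obtain ⟨n, rfl⟩ : ∃ n, l = n + 1 := ⟨l - 1, by omega⟩
  have hloc : IsLocalMax (fun x => (1 - x ^ 2) ^ (n + 1) * u x ^ 2) x0 := by
    filter_upwards [Ioo_mem_nhds hx.1 hx.2] with x hx using hmax x hx
  have hd := (hd_vpow n x0).mul ((h1 x0).pow 2)
  have := hloc.hasDerivAt_eq_zero hd
  simp only [Pi.pow_apply] at this
  have hP : (1 - x0 ^ 2) ^ n * u x0 * 2 ≠ 0 := by positivity
  have h3 : (1 - x0 ^ 2) ^ n * u x0 * 2 * ((1 - x0 ^ 2) * u1 x0 - (n + 1) * x0 * u x0) = 0 := by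
    rw [← this]; push_cast; ring
  have := (mul_eq_zero.1 h3).resolve_left hP
  push_cast
  linarith

theorem anti_of (f f' : ℝ → ℝ) (a b : ℝ) (h : ∀ x, HasDerivAt f (f' x) x)
    (hn : ∀ x ∈ Set.Icc a b, f' x ≤ 0) : AntitoneOn f (Set.Icc a b) := by
  apply antitoneOn_of_deriv_nonpos (convex_Icc _ _)
  · exact fun x _ => (h x).continuousAt.continuousWithinAt
  · exact fun x _ => (h x).differentiableAt.differentiableWithinAt
  · intro x hx
    rw [(h x).deriv]; exact hn x (interior_subset hx)

theorem hd_spow (l : ℕ) (x : ℝ) (hv : 0 < 1 - x ^ 2) :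
    HasDerivAt (fun x : ℝ => √(1 - x ^ 2) ^ l) (-l * x * √(1 - x ^ 2) ^ l / (1 - x ^ 2)) x := by
  have := ((hd_v x).sqrt hv.ne').pow l
  refine this.congr_deriv ?_
  have hs : 0 < √(1 - x ^ 2) := sqrt_pos.2 hv
  rcases l with _ | n
  · simp
  · have e : √(1 - x ^ 2) ^ 2 = 1 - x ^ 2 := sq_sqrt hv.le
    generalize √(1 - x ^ 2) = s at *
    rw [← e]
    push_cast
    field_simp
    ring

theorem hd_Y (u u1 : ℝ → ℝ) (l : ℕ) (h1 : ∀ x, HasDerivAt u (u1 x) x) (x : ℝ)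
    (hv : 0 < 1 - x ^ 2) :
    HasDerivAt (fun x => √(1 - x ^ 2) ^ l * u x)
      (√(1 - x ^ 2) ^ l * ((1 - x ^ 2) * u1 x - l * x * u x) / (1 - x ^ 2)) x := by
  have := (hd_spow l x hv).mul (h1 x)
  refine this.congr_deriv ?_
  field_simp
  ring

theorem hd_Z (u u1 u2 : ℝ → ℝ) (l : ℕ) (A : ℝ) (h1 : ∀ x, HasDerivAt u (u1 x) x)
    (h2 : ∀ x, HasDerivAt u1 (u2 x) x)
    (ode : ∀ x, (1 - x ^ 2) * u2 x - 2 * (l + 1) * x * u1 x + A * u x = 0) (x : ℝ)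
    (hv : 0 < 1 - x ^ 2) :
    HasDerivAt (fun x => √(1 - x ^ 2) ^ l * ((1 - x ^ 2) * u1 x - l * x * u x))
      (-((A + l * (l + 1)) * (1 - x ^ 2) - (l : ℝ) ^ 2) * (√(1 - x ^ 2) ^ l * u x) / (1 - x ^ 2))
      x := by
  have := (hd_spow l x hv).mul (((hd_v x).mul (h2 x)).sub
    (((hasDerivAt_id x).const_mul (l : ℝ)).mul (h1 x)))
  refine this.congr_deriv ?_
  have e : (1 - x ^ 2) * u2 x = 2 * (l + 1) * x * u1 x - A * u x := by linarith [ode x]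
  simp only [Pi.mul_apply, Pi.sub_apply, id]
  rw [e]
  field_simp
  ring

theorem crit_exists_pos (u u1 u2 : ℝ → ℝ) (l : ℕ) (hl : 1 ≤ l) (A : ℝ) (hA : 0 ≤ A)
    (h1 : ∀ x, HasDerivAt u (u1 x) x)
    (h2 : ∀ x, HasDerivAt u1 (u2 x) x)
    (ode : ∀ x, (1 - x ^ 2) * u2 x - 2 * (l + 1) * x * u1 x + A * u x = 0)
    (hu : 0 < u 1) (κ : ℝ) (hκ : κ = A / (2 * (l + 1))) :
    ∃ x0, 0 ≤ x0 ∧ x0 < 1 ∧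
      κ * (1 - x0 ^ 2) * (1 + κ * (1 - x0 ^ 2) / (2 * (l + 2))) ≤ l * x0 ∧
      (1 - x0 ^ 2) * u1 x0 = l * x0 * u x0 ∧ u x0 ≠ 0 ∧
      ∀ x ∈ Set.Icc x0 1, (1 - x ^ 2) ^ l * u x ^ 2 ≤ (1 - x0 ^ 2) ^ l * u x0 ^ 2 := by
  have hl0 : (0 : ℝ) < l := by exact_mod_cast hl
  have hκ0 : 0 ≤ κ := by rw [hκ]; positivity
  have hAκ : A = κ * (2 * (l + 1)) := by rw [hκ]; field_simp
  have cu : Continuous u := continuous_iff_continuousAt.2 fun x => (h1 x).continuousAt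
  have cu1 : Continuous u1 := continuous_iff_continuousAt.2 fun x => (h2 x).continuousAt
  obtain ⟨x1, hx1, hf⟩ : ∃ x1 ∈ Set.Icc (0:ℝ) 1,
      l * x1 - κ * (1 - x1 ^ 2) * (1 + κ * (1 - x1 ^ 2) / (2 * (l + 2))) = 0 := by
    have := intermediate_value_Icc (zero_le_one' ℝ) (f := fun x : ℝ =>
      l * x - κ * (1 - x ^ 2) * (1 + κ * (1 - x ^ 2) / (2 * (l + 2)))) (by fun_prop)
    refine this ⟨?_, ?_⟩
    · have : 0 ≤ κ * (1 + κ / (2 * (l + 2))) := by positivity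
      simpa using this
    · simp
  have hx1l : x1 < 1 := by
    rcases lt_or_eq_of_le hx1.2 with h | h
    · exact h
    · rw [h] at hf; simp at hf; omega
  have hmono : ∀ x, x1 ≤ x → x < 1 →
      κ * (1 - x ^ 2) * (1 + κ * (1 - x ^ 2) / (2 * (l + 2))) ≤ l * x := by
    intro x hx hx'
    have hx0 := hx1.1
    have hv : 0 < 1 - x ^ 2 := by nlinarith
    have hvv : 1 - x ^ 2 ≤ 1 - x1 ^ 2 := by nlinarith
    have hv1 : 0 ≤ κ * (1 - x1 ^ 2) := mul_nonneg hκ0 (by linarith)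
    calc _ ≤ κ * (1 - x1 ^ 2) * (1 + κ * (1 - x1 ^ 2) / (2 * (l + 2))) := by gcongr
      _ = l * x1 := by linarith
      _ ≤ l * x := by gcongr
  by_cases hex : ∃ ξ ∈ Set.Ioo x1 1, (1 - ξ ^ 2) * u1 ξ = l * ξ * u ξ
  · obtain ⟨ξ, hξ, hc⟩ := hex
    obtain ⟨x0, hx0, hm⟩ := (isCompact_Icc (a := ξ) (b := 1)).exists_isMaxOn
      ⟨ξ, le_rfl, hξ.2.le⟩ (f := fun x => (1 - x ^ 2) ^ l * u x ^ 2) (by fun_prop)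
    have hm' : ∀ x ∈ Set.Icc ξ 1, (1 - x ^ 2) ^ l * u x ^ 2 ≤ (1 - x0 ^ 2) ^ l * u x0 ^ 2 :=
      fun x hx => hm hx
    obtain ⟨y, hy, hy'⟩ : ∃ y ∈ Set.Ioo ξ 1, 0 < u y := by
      have e1 : ∀ᶠ y in nhdsWithin 1 (Set.Iio 1), 0 < u y :=
        (cu.continuousAt.eventually (lt_mem_nhds hu)).filter_mono nhdsWithin_le_nhds
      have e2 : ∀ᶠ y in nhdsWithin (1:ℝ) (Set.Iio 1), y ∈ Set.Ioo ξ 1 := Ioo_mem_nhdsLT hξ.2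
      obtain ⟨y, h⟩ := (e1.and e2).exists
      exact ⟨y, h.2, h.1⟩
    have hx1n := hx1.1
    have hvy : 0 < 1 - y ^ 2 := by nlinarith [hξ.1, hy.1, hy.2]
    have hVy : 0 < (1 - x0 ^ 2) ^ l * u x0 ^ 2 :=
      lt_of_lt_of_le (by positivity) (hm' y ⟨hy.1.le, hy.2.le⟩)
    have hu0 : u x0 ≠ 0 := by
      intro h; rw [h] at hVy; simp at hVy
    have hx01 : x0 < 1 := by
      rcases lt_or_eq_of_le hx0.2 with h | h
      · exact h
      · rw [h] at hVy; simp [show l ≠ 0 by omega] at hVy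
    have hx00 : 0 ≤ x0 := by linarith [hx0.1, hξ.1]
    refine ⟨x0, hx00, hx01, hmono x0 (by linarith [hx0.1, hξ.1]) hx01, ?_, hu0,
      fun x hx => hm' x ⟨hx0.1.trans hx.1, hx.2⟩⟩
    rcases lt_or_eq_of_le hx0.1 with h | h
    · exact crit_of_max u u1 l hl ξ 1 x0 h1 ⟨h, hx01⟩ (by nlinarith) hu0
        fun x hx => hm' x ⟨hx.1.le, hx.2.le⟩
    · rw [← h]; exact hc
  · push Not at hex
    have hx1n := hx1.1
    have hvp : ∀ x ∈ Set.Ico x1 1, 0 < 1 - x ^ 2 := by rintro x ⟨a, b⟩; nlinarith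
    have hvn : ∀ x ∈ Set.Icc x1 1, 0 ≤ 1 - x ^ 2 := by rintro x ⟨a, b⟩; nlinarith
    have hv1 := hvp x1 ⟨le_rfl, hx1l⟩
    have hpneg : ∀ x ∈ Set.Ioo x1 1, (1 - x ^ 2) * u1 x - l * x * u x < 0 := by
      intro x hx
      by_contra hcon
      push Not at hcon
      have := intermediate_value_Icc' hx.2.le (f := fun x : ℝ =>
        (1 - x ^ 2) * u1 x - l * x * u x) (by fun_prop)
      obtain ⟨z, hz, hz'⟩ := this (a := 0) ⟨by simp; positivity, hcon⟩
      simp only at hz'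
      have hz1 : z < 1 := by
        rcases lt_or_eq_of_le hz.2 with h | h
        · exact h
        · rw [h] at hz'; norm_num at hz'; exfalso; rcases hz' with h | h
          · omega
          · linarith
      exact hex z ⟨lt_of_lt_of_le hx.1 hz.1, hz1⟩ (by linarith)
    have hp1 : (1 - x1 ^ 2) * u1 x1 - l * x1 * u x1 ≤ 0 := by
      have hcont : Continuous (fun x : ℝ => (1 - x ^ 2) * u1 x - l * x * u x) := by fun_prop
      have e2 : ∀ᶠ y in nhdsWithin x1 (Set.Ioi x1), (1 - y ^ 2) * u1 y - l * y * u y ≤ 0 := by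
        filter_upwards [Ioo_mem_nhdsGT hx1l] with y hy using (hpneg y hy).le
      exact le_of_tendsto (hcont.continuousAt.tendsto.mono_left nhdsWithin_le_nhds) e2
    have hYanti : StrictAntiOn (fun x => √(1 - x ^ 2) ^ l * u x) (Set.Icc x1 1) := by
      apply strictAntiOn_of_deriv_neg (convex_Icc _ _) (by fun_prop)
      intro x hx
      rw [interior_Icc] at hx
      have hv := hvp x ⟨hx.1.le, hx.2⟩
      rw [(hd_Y u u1 l h1 x hv).deriv]
      have hs : 0 < √(1 - x ^ 2) := sqrt_pos.2 hv
      apply div_neg_of_neg_of_pos _ hv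
      exact mul_neg_of_pos_of_neg (by positivity) (hpneg x hx)
    have hup : ∀ x ∈ Set.Icc x1 1, 0 < u x := by
      intro x hx
      rcases lt_or_eq_of_le hx.2 with h | h
      · have := hYanti hx ⟨hx1l.le, le_rfl⟩ h
        simp [show l ≠ 0 by omega] at this
        exact pos_of_mul_pos_right this (by positivity)
      · rw [h]; exact hu
    have m1 : x1 ∈ Set.Icc x1 1 := ⟨le_rfl, hx1l.le⟩
    have m2 : (1:ℝ) ∈ Set.Icc x1 1 := ⟨hx1l.le, le_rfl⟩
    have hF := hd_flux u u1 u2 l A h2 ode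
    have hF0 := anti_of _ _ x1 1 hF (by
      intro x hx
      have := hup x hx
      have := hvn x hx
      have : 0 ≤ A * (1 - x ^ 2) ^ l * u x := by positivity
      linarith)
    have hu1n : ∀ x ∈ Set.Ico x1 1, 0 ≤ u1 x := by
      intro x hx
      have := hF0 ⟨hx.1, hx.2.le⟩ m2 hx.2.le
      simp at this
      exact nonneg_of_mul_nonneg_right this (pow_pos (hvp x hx) _)
    have hmonu : ∀ c, (∀ x ∈ Set.Ico x1 1, c ≤ u1 x) →
        ∀ x ∈ Set.Icc x1 1, u x1 + c * (x - x1) ≤ u x := by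
      intro c hc x hx
      have : MonotoneOn (fun x => u x - c * x) (Set.Icc x1 1) := by
        apply monotoneOn_of_deriv_nonneg (convex_Icc _ _) (by fun_prop)
        · exact fun x _ => ((h1 x).sub
            ((hasDerivAt_id x).const_mul c)).differentiableAt.differentiableWithinAt
        · intro x hx
          rw [interior_Icc] at hx
          have h := ((h1 x).sub ((hasDerivAt_id x).const_mul c)).deriv
          have h' : deriv (fun x => u x - c * x) x = u1 x - c * 1 := h
          rw [h']
          have := hc x ⟨hx.1.le, hx.2⟩
          linarith
      have := this m1 hx hx.1
      simp only at this
      linarith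
    have hu0 := hup x1 m1
    have hG1 := anti_of (fun x => (1 - x ^ 2) ^ (l + 1) * u1 x - κ * u x1 * (1 - x ^ 2) ^ (l + 1))
      _ x1 1 (fun x => (hF x).sub ((hd_vpow l x).const_mul (κ * u x1))) (by
      intro x hx
      have hv := hvn x hx
      have h3 := hmonu 0 hu1n x hx
      have h4 : u x1 * x ≤ u x := by nlinarith [hx.2]
      have h5 : 0 ≤ A * (1 - x ^ 2) ^ l * (u x - u x1 * x) :=
        mul_nonneg (by positivity) (by linarith)
      refine le_trans (le_of_eq ?_) (neg_nonpos.2 h5)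
      rw [hAκ]; ring)
    have hu1k : ∀ x ∈ Set.Ico x1 1, κ * u x1 ≤ u1 x := by
      intro x hx
      have := hG1 ⟨hx.1, hx.2.le⟩ m2 hx.2.le
      simp at this
      have hP := pow_pos (hvp x hx) (l + 1)
      rw [mul_comm] at this
      exact le_of_mul_le_mul_right (by linarith) hP
    have hG2 := anti_of (fun x => (1 - x ^ 2) ^ (l + 1) * u1 x - A * u x1 / 2 *
        ((1 + κ * (1 - x1 ^ 2) / 2) / (l + 1) * (1 - x ^ 2) ^ (l + 1)
          - κ / 2 / (l + 2) * (1 - x ^ 2) ^ (l + 1 + 1)))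
      _ x1 1 (fun x => (hF x).sub ((((hd_vpow l x).const_mul _).sub
        ((hd_vpow (l + 1) x).const_mul _)).const_mul _)) (by
      intro x hx
      have hv := hvn x hx
      have h3 := hmonu _ hu1k x hx
      have hx0 : 0 ≤ x := hx1n.trans hx.1
      have h6 : (1 - x1 ^ 2) - (1 - x ^ 2) ≤ 2 * (x - x1) := by nlinarith [hx.1, hx.2]
      have h7 : u x1 * (1 + κ * ((1 - x1 ^ 2) - (1 - x ^ 2)) / 2) ≤ u x := by
        refine le_trans ?_ h3
        have : 0 ≤ κ * u x1 := by positivity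
        nlinarith [mul_le_mul_of_nonneg_left h6 this]
      have h8 : 0 ≤ u x1 * (1 + κ * ((1 - x1 ^ 2) - (1 - x ^ 2)) / 2) := by
        have : 0 ≤ (1 - x1 ^ 2) - (1 - x ^ 2) := by nlinarith [hx.1]
        positivity
      have h4 : u x1 * (1 + κ * ((1 - x1 ^ 2) - (1 - x ^ 2)) / 2) * x ≤ u x := by
        nlinarith [hx.2]
      have h5 : 0 ≤ A * (1 - x ^ 2) ^ l *
          (u x - u x1 * (1 + κ * ((1 - x1 ^ 2) - (1 - x ^ 2)) / 2) * x) :=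
        mul_nonneg (by positivity) (by linarith)
      refine le_trans (le_of_eq ?_) (neg_nonpos.2 h5)
      push_cast
      generalize 1 - x1 ^ 2 = v1
      generalize 1 - x ^ 2 = v
      field_simp
      ring)
    have hB := hG2 m1 m2 hx1l.le
    simp at hB
    refine ⟨x1, hx1n, hx1l, hmono x1 le_rfl hx1l, ?_, hu0.ne', ?_⟩
    · have hge : κ * u x1 * (1 + κ * (1 - x1 ^ 2) / (2 * (l + 2))) ≤ u1 x1 := by
        have hP := pow_pos hv1 (l + 1)
        refine le_of_mul_le_mul_left (le_trans (le_of_eq ?_) hB) hP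
        rw [hAκ]
        generalize 1 - x1 ^ 2 = v1
        field_simp
        ring
      have := mul_le_mul_of_nonneg_left hge hv1.le
      have h9 : l * x1 * u x1 = (1 - x1 ^ 2) *
          (κ * u x1 * (1 + κ * (1 - x1 ^ 2) / (2 * (l + 2)))) := by
        have : l * x1 = κ * (1 - x1 ^ 2) * (1 + κ * (1 - x1 ^ 2) / (2 * (l + 2))) := by linarith
        rw [this]; ring
      linarith
    · intro x hx
      have h3 : √(1 - x ^ 2) ^ l * u x ≤ √(1 - x1 ^ 2) ^ l * u x1 := hYanti.antitoneOn m1 hx hx.1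
      have h4 := hup x hx
      have h5 : (√(1 - x ^ 2) ^ l * u x) ^ 2 ≤ (√(1 - x1 ^ 2) ^ l * u x1) ^ 2 := by gcongr
      have e : ∀ y ∈ Set.Icc x1 1, (√(1 - y ^ 2) ^ l * u y) ^ 2 = (1 - y ^ 2) ^ l * u y ^ 2 := by
        intro y hy
        rw [mul_pow, ← pow_mul, mul_comm l 2, pow_mul, sq_sqrt (hvn y hy)]
      rw [← e x hx, ← e x1 m1]
      exact h5

theorem crit_exists (u u1 u2 : ℝ → ℝ) (l : ℕ) (hl : 1 ≤ l) (A : ℝ) (hA : 0 ≤ A)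
    (h1 : ∀ x, HasDerivAt u (u1 x) x)
    (h2 : ∀ x, HasDerivAt u1 (u2 x) x)
    (ode : ∀ x, (1 - x ^ 2) * u2 x - 2 * (l + 1) * x * u1 x + A * u x = 0)
    (hu : u 1 ≠ 0) (κ : ℝ) (hκ : κ = A / (2 * (l + 1))) :
    ∃ x0, 0 ≤ x0 ∧ x0 < 1 ∧
      κ * (1 - x0 ^ 2) * (1 + κ * (1 - x0 ^ 2) / (2 * (l + 2))) ≤ l * x0 ∧
      (1 - x0 ^ 2) * u1 x0 = l * x0 * u x0 ∧ u x0 ≠ 0 ∧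
      ∀ x ∈ Set.Icc x0 1, (1 - x ^ 2) ^ l * u x ^ 2 ≤ (1 - x0 ^ 2) ^ l * u x0 ^ 2 := by
  rcases lt_or_gt_of_ne hu with h | h
  · obtain ⟨x0, a, b, c, d, e, f⟩ := crit_exists_pos (fun x => -u x) (fun x => -u1 x)
      (fun x => -u2 x) l hl A hA (fun x => (h1 x).neg)
      (fun x => (h2 x).neg) (fun x => by linarith [ode x]) (by simpa using h) κ hκ
    refine ⟨x0, a, b, c, by linarith, by simpa using e, by simpa using f⟩
  · exact crit_exists_pos u u1 u2 l hl A hA h1 h2 ode h κ hκ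

theorem sq_Y (l : ℕ) (x : ℝ) (hv : 0 ≤ 1 - x ^ 2) (u : ℝ) :
    (√(1 - x ^ 2) ^ l * u) ^ 2 = (1 - x ^ 2) ^ l * u ^ 2 := by
  rw [mul_pow, ← pow_mul, mul_comm l 2, pow_mul, sq_sqrt hv]

theorem up_core (u u1 u2 : ℝ → ℝ) (l : ℕ) (hl : 1 ≤ l) (A : ℝ) (hA : 0 ≤ A)
    (h1 : ∀ x, HasDerivAt u (u1 x) x)
    (h2 : ∀ x, HasDerivAt u1 (u2 x) x)
    (ode : ∀ x, (1 - x ^ 2) * u2 x - 2 * (l + 1) * x * u1 x + A * u x = 0)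
    (x0 : ℝ) (h0 : 0 ≤ x0) (hx1 : x0 < 1) (hu : u x0 ≠ 0)
    (hmax : ∀ x ∈ Set.Icc (-1 : ℝ) 1,
      (1 - x ^ 2) ^ l * u x ^ 2 ≤ (1 - x0 ^ 2) ^ l * u x0 ^ 2) :
    √l * ((1 - x0 ^ 2) ^ l * u x0 ^ 2) ≤ √(A + l) * u 0 ^ 2 + u1 0 ^ 2 / √(A + l) := by
  have hl' : (1 : ℝ) ≤ l := by exact_mod_cast hl
  have hv0 : 0 < 1 - x0 ^ 2 := by nlinarith
  have hQ : (l : ℝ) ≤ (A + l * (l + 1)) * (1 - x0 ^ 2) - (l : ℝ) ^ 2 := by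
    rcases eq_or_lt_of_le h0 with h | h
    · rw [← h]; nlinarith
    · have hc := crit_of_max u u1 l hl (-1) 1 x0 h1 ⟨by linarith, hx1⟩ hv0 hu
        fun x hx => hmax x ⟨hx.1.le, hx.2.le⟩
      have := Q_ge u u1 u2 l A x0 hA h2 ode h hx1 hu hc
        fun x hx => hmax x ⟨by linarith [hx.1], hx.2⟩
      nlinarith
  have hv : ∀ x ∈ Set.Icc 0 x0, 0 < 1 - x ^ 2 := by rintro x ⟨a, b⟩; nlinarith
  have := sonin_up (fun x => √(1 - x ^ 2) ^ l * u x)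
    (fun x => √(1 - x ^ 2) ^ l * ((1 - x ^ 2) * u1 x - l * x * u x)) (A + l * (l + 1)) l x0 h0 hx1
    (by positivity) (by linarith) (fun x hx => hd_Y u u1 l h1 x (hv x hx))
    (fun x hx => hd_Z u u1 u2 l A h1 h2 ode x (hv x hx))
  rw [show A + l * ((l:ℝ) + 1) - (l:ℝ) ^ 2 = A + l by ring] at this
  simp only [sq_Y l x0 hv0.le] at this
  norm_num at this
  refine le_trans ?_ this
  have : 0 ≤ (1 - x0 ^ 2) ^ l * u x0 ^ 2 := by positivity
  gcongr

theorem low_core (u u1 u2 : ℝ → ℝ) (l : ℕ) (hl : 1 ≤ l) (A : ℝ) (hA : 0 ≤ A)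
    (h1 : ∀ x, HasDerivAt u (u1 x) x)
    (h2 : ∀ x, HasDerivAt u1 (u2 x) x)
    (ode : ∀ x, (1 - x ^ 2) * u2 x - 2 * (l + 1) * x * u1 x + A * u x = 0)
    (hu : u 1 ≠ 0) (κ : ℝ) (hκ : κ = A / (2 * (l + 1))) :
    ∃ x0, 0 ≤ x0 ∧ x0 < 1 ∧
      κ * (1 - x0 ^ 2) * (1 + κ * (1 - x0 ^ 2) / (2 * (l + 2))) ≤ l * x0 ∧
      (u 0 ^ 2 + u1 0 ^ 2 / (A + l + 1 / 2)) ≤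
        √(1 - x0 ^ 2) * ((1 - x0 ^ 2) ^ l * u x0 ^ 2) * ((8 * l + 2) / (8 * l + 1)) := by
  obtain ⟨x0, h0, hx1, hk, hc, hu0, hmax⟩ := crit_exists u u1 u2 l hl A hA h1 h2 ode hu κ hκ
  refine ⟨x0, h0, hx1, hk, ?_⟩
  have hl' : (1 : ℝ) ≤ l := by exact_mod_cast hl
  have hv0 : 0 < 1 - x0 ^ 2 := by nlinarith
  have hq : l * (l + 2) * x0 ^ 2 ≤ A * (1 - x0 ^ 2) := by
    rcases eq_or_lt_of_le h0 with h | h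
    · rw [← h]; simpa using hA
    · exact Q_ge u u1 u2 l A x0 hA h2 ode h hx1 hu0 hc hmax
  have hQ : l + l * x0 ^ 2 ≤ (A + l * (l + 1)) * (1 - x0 ^ 2) - (l : ℝ) ^ 2 := by
    nlinarith
  have hv : ∀ x ∈ Set.Icc 0 x0, 0 < 1 - x ^ 2 := by rintro x ⟨a, b⟩; nlinarith
  have := sonin_low (fun x => √(1 - x ^ 2) ^ l * u x)
    (fun x => √(1 - x ^ 2) ^ l * ((1 - x ^ 2) * u1 x - l * x * u x)) (A + l * (l + 1)) l x0 h0 hx1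
    hl' (by nlinarith) (fun x hx => hd_Y u u1 l h1 x (hv x hx))
    (fun x hx => hd_Z u u1 u2 l A h1 h2 ode x (hv x hx)) (by simp only [hc]; ring)
  rw [show A + l * ((l:ℝ) + 1) - (l:ℝ) ^ 2 = A + l by ring] at this
  simp only [sq_Y l x0 hv0.le] at this
  generalize (A + l * (l + 1)) * (1 - x0 ^ 2) - (l : ℝ) ^ 2 = Q at *
  have e : u 0 ^ 2 + u1 0 ^ 2 / (A + l + 1 / 2) ≤ √(1 - x0 ^ 2) * ((1 - x0 ^ 2) ^ l * u x0 ^ 2) *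
      (1 + x0 ^ 2 / (4 * Q + (1 - x0 ^ 2) + 1)) := by
    simpa using this
  refine e.trans ?_
  have : 1 + x0 ^ 2 / (4 * Q + (1 - x0 ^ 2) + 1) ≤ (8 * l + 2) / (8 * l + 1) := by
    have hQ0 : 0 < 4 * Q + (1 - x0 ^ 2) + 1 := by nlinarith
    rw [← sub_nonneg]
    have : (8 * (l:ℝ) + 2) / (8 * l + 1) - (1 + x0 ^ 2 / (4 * Q + (1 - x0 ^ 2) + 1)) =
      ((4 * Q + (1 - x0 ^ 2) + 1) - x0 ^ 2 * (8 * l + 1)) /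
        ((8 * l + 1) * (4 * Q + (1 - x0 ^ 2) + 1)) := by
      field_simp
      ring
    rw [this]
    apply div_nonneg _ (by positivity)
    nlinarith
  gcongr

open Polynomial in
theorem iter_poly (p : ℝ[X]) (n : ℕ) :
    iteratedDeriv n (fun x => p.eval x) = fun x => (derivative^[n] p).eval x := by
  induction n with
  | zero => simp
  | succ n ih =>
    rw [iteratedDeriv_succ, ih]
    funext x
    rw [Polynomial.deriv, Function.iterate_succ_apply']

open Polynomial in
theorem rod_base (m : ℕ) : (X ^ 2 - 1 : ℝ[X]) * derivative ((X ^ 2 - 1 : ℝ[X]) ^ m)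
    = 2 * (m : ℝ[X]) * X * (X ^ 2 - 1) ^ m := by
  rcases m with _ | m
  · simp
  · rw [derivative_pow]
    simp
    ring

open Polynomial in
theorem rod_rec (m n : ℕ) : (X ^ 2 - 1 : ℝ[X]) * derivative^[n + 2] ((X ^ 2 - 1 : ℝ[X]) ^ m)
    + 2 * ((n : ℝ[X]) + 1 - (m : ℝ[X])) * X * derivative^[n + 1] ((X ^ 2 - 1 : ℝ[X]) ^ m)
    + ((n : ℝ[X]) + 1) * ((n : ℝ[X]) - 2 * (m : ℝ[X])) * derivative^[n] ((X ^ 2 - 1 : ℝ[X]) ^ m) = 0 := by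
  induction n with
  | zero =>
    have := congrArg derivative (rod_base m)
    simp [derivative_mul] at this
    simp
    linear_combination this
  | succ n ih =>
    have hg : ∀ k, derivative (derivative^[k] ((X ^ 2 - 1 : ℝ[X]) ^ m))
        = derivative^[k + 1] ((X ^ 2 - 1 : ℝ[X]) ^ m) :=
      fun k => (Function.iterate_succ_apply' _ _ _).symm
    have := congrArg derivative ih
    simp only [derivative_mul, derivative_add, derivative_sub, derivative_natCast, derivative_X,
      hg, derivative_one, derivative_zero, derivative_X_pow,
      derivative_ofNat] at this
    have e2 : (C ((2 : ℕ) : ℝ) : ℝ[X]) = 2 := by exact_mod_cast map_ofNat C 2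
    rw [e2] at this
    push_cast
    linear_combination this

open Polynomial in
theorem rod_coeff (m j : ℕ) : (((X ^ 2 - 1 : ℝ[X]) ^ m).coeff (2 * j)) = (-1) ^ (m - j) * m.choose j := by
  have : (X ^ 2 - 1 : ℝ[X]) ^ m = expand ℝ 2 ((X + C (-1)) ^ m) := by
    simp [sub_eq_add_neg]
  rw [this, mul_comm, coeff_expand_mul (by norm_num), coeff_X_add_C_pow]

open Polynomial in
theorem rod_coeff_odd (m j : ℕ) : (((X ^ 2 - 1 : ℝ[X]) ^ m).coeff (2 * j + 1)) = 0 := by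
  have : (X ^ 2 - 1 : ℝ[X]) ^ m = expand ℝ 2 ((X + C (-1)) ^ m) := by
    simp [sub_eq_add_neg]
  rw [this, coeff_expand (by norm_num)]
  simp

open Polynomial in
theorem rod_zero (p : ℝ[X]) (n : ℕ) : (derivative^[n] p).eval 0 = n.factorial * p.coeff n := by
  rw [← coeff_zero_eq_eval_zero, coeff_iterate_derivative]
  simp [Nat.descFactorial_self]

open Polynomial in
theorem rod_one (m r : ℕ) (hr : r ≤ m) :
    (derivative^[m + r] ((X ^ 2 - 1 : ℝ[X]) ^ m)).eval 1 ≠ 0 := by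
  obtain ⟨d, rfl⟩ := Nat.exists_eq_add_of_le hr
  clear hr
  induction d generalizing r with
  | zero =>
    have h : (derivative^[r + r] ((X ^ 2 - 1 : ℝ[X]) ^ r)) = C (((r+r).factorial : ℝ)) := by
      rw [eq_C_of_natDegree_eq_zero (p := derivative^[r + r] ((X ^ 2 - 1 : ℝ[X]) ^ r)),
        coeff_zero_eq_eval_zero, rod_zero, show r + r = 2 * r by ring, rod_coeff]
      · simp
      · have h1 := natDegree_iterate_derivative ((X ^ 2 - 1 : ℝ[X]) ^ r) (r + r)
        have h2 : ((X ^ 2 - 1 : ℝ[X]) ^ r).natDegree ≤ r * 2 := by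
          apply natDegree_pow_le_of_le
          compute_degree
        omega
    simp [h]
    positivity
  | succ d ih =>
    have h := congrArg (eval 1) (rod_rec (r + (d + 1)) (r + (d + 1) + r))
    simp at h
    have h2 := ih (r + 1)
    rw [show r + 1 + d = r + (d + 1) by ring] at h2
    intro h0
    rw [h0] at h
    simp at h
    rcases h with h | h
    · have : (r:ℝ) + 1 ≠ 0 := by positivity
      apply this
      linarith
    · exact h2 h

/-- The normalized central binomial coefficient. -/
noncomputable def cbin (k : ℕ) : ℝ := ((2 * k).factorial : ℝ) / ((k.factorial : ℝ) ^ 2 * 4 ^ k)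

theorem cbin_pos (k : ℕ) : 0 < cbin k := by unfold cbin; positivity

theorem W_cbin (k : ℕ) : Real.Wallis.W k * (cbin k ^ 2 * (2 * k + 1)) = 1 := by
  rw [Real.Wallis.W_eq_factorial_ratio]
  unfold cbin
  have : (4 : ℝ) ^ k = 2 ^ (2 * k) := by rw [pow_mul]; norm_num
  have h4 : (2:ℝ) ^ (4 * k) = (2 ^ (2 * k)) ^ 2 := by rw [← pow_mul]; ring_nf
  rw [this, h4]
  field_simp

theorem cbin_lower (k : ℕ) : 2 ≤ π * cbin k ^ 2 * (2 * k + 1) := by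
  have h := W_cbin k
  have h1 := Real.Wallis.W_le k
  have : 0 < cbin k ^ 2 * (2 * k + 1) := by have := cbin_pos k; positivity
  have := mul_le_mul_of_nonneg_right h1 this.le
  linarith

theorem cbin_upper (k : ℕ) : π * cbin k ^ 2 * (2 * k + 1) ^ 2 ≤ 4 * (k + 1) := by
  have h := W_cbin k
  have h1 := Real.Wallis.le_W k
  have : 0 < cbin k ^ 2 * (2 * k + 1) := by have := cbin_pos k; positivity
  have := mul_le_mul_of_nonneg_right h1 this.le
  rw [h] at this
  have hk : (0:ℝ) < 2 * k + 2 := by positivity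
  have h3 : ((2:ℝ) * k + 1) / (2 * k + 2) * (π / 2) * (cbin k ^ 2 * (2 * k + 1)) =
     (π * cbin k ^ 2 * (2 * k + 1) ^ 2) / (4 * (k + 1)) := by field_simp; ring
  rw [h3, div_le_one (by positivity)] at this
  exact this

open Polynomial in
theorem legendre_data (m l : ℕ) (hlm : l ≤ m) : ∃ u u1 u2 : ℝ → ℝ,
    (∀ x, HasDerivAt u (u1 x) x) ∧ (∀ x, HasDerivAt u1 (u2 x) x) ∧
    (∀ x, (1 - x ^ 2) * u2 x - 2 * (l + 1) * x * u1 x + ((m : ℝ) - l) * (m + l + 1) * u x = 0) ∧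
    u 1 ≠ 0 ∧
    (∀ x, Real.sqrt (((m - l).factorial : ℝ) / ((m + l).factorial : ℝ)) *
          assocLegendreP m l x = √(1 - x ^ 2) ^ l * u x) ∧
    (∀ j k, m + l = 2 * j → m - l = 2 * k → u 0 ^ 2 = cbin j * cbin k ∧ u1 0 = 0) ∧
    (∀ j k, m + l + 1 = 2 * j → m - l = 2 * k + 1 →
      u 0 = 0 ∧ u1 0 ^ 2 = 2 * j * (2 * k + 1) * (cbin j * cbin k)) := by
  set f : ℝ[X] := (X ^ 2 - 1) ^ m with hf
  set N : ℝ := √(((m - l).factorial : ℝ) / ((m + l).factorial : ℝ)) with hN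
  set a : ℝ := 1 / (2 ^ m * m.factorial) with ha
  have hN2 : N ^ 2 = ((m - l).factorial : ℝ) / ((m + l).factorial : ℝ) := sq_sqrt (by positivity)
  have hN0 : N ≠ 0 := by
    intro h; rw [h] at hN2
    have : 0 < ((m - l).factorial : ℝ) / ((m + l).factorial : ℝ) := by positivity
    norm_num at hN2
    rw [← hN2] at this; simp at this
  have ha0 : a ≠ 0 := by rw [ha]; positivity
  have hd : ∀ n x, HasDerivAt (fun x => N * a * (derivative^[n] f).eval x)
      (N * a * (derivative^[n + 1] f).eval x) x := by
    intro n x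
    rw [Function.iterate_succ_apply']
    exact ((derivative^[n] f).hasDerivAt x).const_mul _
  refine ⟨_, _, _, hd (m + l), hd (m + l + 1), ?_, ?_, ?_, ?_, ?_⟩
  · intro x
    have h := congrArg (eval x) (rod_rec m (m + l))
    simp only [eval_add, eval_mul, eval_sub, eval_pow, eval_X, eval_one, eval_natCast, eval_ofNat,
      eval_zero, Nat.cast_add] at h
    rw [← hf] at h
    linear_combination (-(N * a)) * h
  · exact mul_ne_zero (mul_ne_zero hN0 ha0) (rod_one m l hlm)
  · intro x
    have h1 : legendreP m = fun x => (C a * derivative^[m] f).eval x := by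
      funext x
      unfold legendreP
      have : (fun y : ℝ => (y ^ 2 - 1) ^ m) = fun y => f.eval y := by funext y; simp [hf]
      rw [this, iter_poly]
      simp [ha]
    unfold assocLegendreP
    rw [h1, iter_poly]
    simp only [iterate_derivative_C_mul, ← Function.iterate_add_apply, eval_mul, eval_C]
    rw [add_comm l m]
    ring
  · intro j k hj hk
    have hm : m = j + k := by omega
    simp only [rod_zero]
    constructor
    · rw [hj, hf, rod_coeff, mul_pow, mul_pow, hN2, hj, hk, mul_pow, mul_pow, ← pow_mul,
        mul_comm (m - j), pow_mul]
      have hc := Nat.add_choose_mul_factorial_mul_factorial j k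
      have hc' : ((j + k).choose j : ℝ) = (j + k).factorial / (j.factorial * k.factorial) := by
        rw [← hc, Nat.choose_symm_add]; push_cast; field_simp
      have h4 : ((2:ℝ) ^ (j+k)) ^ 2 = 4 ^ j * 4 ^ k := by
        rw [← pow_mul, mul_comm, pow_mul, pow_add]; norm_num
      rw [ha, hm, hc']
      unfold cbin
      rw [div_pow, mul_pow, h4]
      field_simp
      norm_num
    · rw [hj, hf, rod_coeff_odd]; simp
  · intro j k hj hk
    have hm : m = j + k := by omega
    simp only [rod_zero]
    constructor
    · have : m + l = 2 * (j - 1) + 1 := by omega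
      rw [this, hf, rod_coeff_odd]; simp
    · have h1 : ((2 * j).factorial : ℝ) = 2 * j * (m + l).factorial := by
        rw [← hj, Nat.factorial_succ, hj, ← hj]; push_cast
        have : (m : ℝ) + l + 1 = 2 * j := by exact_mod_cast hj
        rw [this]
      have h2 : ((m - l).factorial : ℝ) = (2 * k + 1) * (2 * k).factorial := by
        rw [hk, Nat.factorial_succ]; push_cast; ring
      rw [hj, hf, rod_coeff, mul_pow, mul_pow, hN2, h2, mul_pow, mul_pow, ← pow_mul,
        mul_comm (m - j), pow_mul]
      have hc := Nat.add_choose_mul_factorial_mul_factorial j k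
      have hc' : ((j + k).choose j : ℝ) = (j + k).factorial / (j.factorial * k.factorial) := by
        rw [← hc, Nat.choose_symm_add]; push_cast; field_simp
      have h4 : ((2:ℝ) ^ (j+k)) ^ 2 = 4 ^ j * 4 ^ k := by
        rw [← pow_mul, mul_comm, pow_mul, pow_add]; norm_num
      have hF : (0:ℝ) < (m + l).factorial := by positivity
      unfold cbin
      rw [h1]
      generalize ((m+l).factorial : ℝ) = F at *
      rw [ha, hm, hc']
      rw [div_pow, mul_pow, h4]
      field_simp
      norm_num

theorem up_even (j k : ℝ) (hj : 0 ≤ j) (hk : 0 ≤ k) :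
    (4 * j * k + j + k) * (j + 1) * (k + 1) * 3.2 < 2 * (2 * j + 1) ^ 2 * (2 * k + 1) ^ 2 := by
  rw [← sub_pos]
  ring_nf
  positivity

theorem up_odd (j k : ℝ) (hj : k + 2 ≤ j) (hk : 0 ≤ k) :
    2 * 3.2 * j ^ 2 * (j + 1) * (k + 1) < (2 * j + 1) ^ 2 * (4 * j * k + 3 * j - k - 1) := by
  obtain ⟨t, rfl⟩ : ∃ t, j = k + 2 + t := ⟨j - k - 2, by ring⟩
  have ht : 0 ≤ t := by linarith
  rw [← sub_pos]
  ring_nf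
  positivity

theorem k_bound (l k : ℝ) (hl : 1 ≤ l) (hk : 0 ≤ k) (h : k * (1 + k / (2 * (l + 2))) ≤ l) :
    k * (8 * l + 2) ^ 2 ≤ 0.79 * (l + 1) * (8 * l + 1) ^ 2 := by
  have h1 : k ≤ 0.79 * (4 * l * (l + 1)) / (4 * l + 1) := by
    by_contra hc
    push Not at hc
    set k1 := 0.79 * (4 * l * (l + 1)) / (4 * l + 1) with hk1
    have h2 : k1 * (1 + k1 / (2 * (l + 2))) ≤ l := by
      refine le_trans ?_ h
      have : 0 ≤ k1 := by rw [hk1]; positivity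
      gcongr
    have e : k1 * (1 + k1 / (2 * (l + 2))) - l = l * (3.16 * (l + 1) * (4 * l + 1) * 2 * (l + 2)
       + 9.9856 * l * (l + 1) ^ 2 - (4 * l + 1) ^ 2 * 2 * (l + 2)) /
        ((4 * l + 1) ^ 2 * 2 * (l + 2)) := by
      rw [hk1]; field_simp; ring
    have : 0 < l * (3.16 * (l + 1) * (4 * l + 1) * 2 * (l + 2)
       + 9.9856 * l * (l + 1) ^ 2 - (4 * l + 1) ^ 2 * 2 * (l + 2)) /
        ((4 * l + 1) ^ 2 * 2 * (l + 2)) := by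
      apply div_pos _ (by positivity)
      ring_nf
      positivity
    linarith
  rw [le_div_iff₀ (by positivity)] at h1
  have h3 : k * (4 * l + 1) * (4 * (4 * l + 1)) ≤ 0.79 * (4 * l * (l + 1)) * (4 * (4 * l + 1)) := by
    gcongr
  nlinarith

theorem low_even (l d : ℕ) (v x κ : ℝ) (hl : 1 ≤ l) (hd : Even d) (hx : 0 ≤ x) (hx1 : x < 1)
    (hv : v = 1 - x ^ 2)
    (hκ : κ = d * (2 * l + d + 1) / (2 * (l + 1)))
    (h : κ * v * (1 + κ * v / (2 * (l + 2))) ≤ l * x) :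
    v * (d + 1) * (2 * l + d + 1) * (8 * l + 2) ^ 2 * 9.87
      < 19.7136 * ((l : ℝ) + 1) ^ 2 * (8 * l + 1) ^ 2 := by
  have hv0 : 0 < v := by rw [hv]; nlinarith
  have hv1 : v ≤ 1 := by rw [hv]; nlinarith
  have hl' : (1 : ℝ) ≤ l := by exact_mod_cast hl
  by_cases h4 : 4 ≤ d
  · have hd4 : (4 : ℝ) ≤ d := by exact_mod_cast h4
    have hk := k_bound l (κ * v) hl' (by rw [hκ]; positivity) (by nlinarith)
    have e : d * (2 * l + d + 1) * v = 2 * (l + 1) * (κ * v) := by rw [hκ]; field_simp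
    have e2 : v * (d + 1) * (2 * l + d + 1) ≤ 2.5 * (l + 1) * (κ * v) := by
      have : 0 ≤ (2 * l + d + 1) * v * (d - 4) :=
        mul_nonneg (by positivity) (by linarith)
      nlinarith
    calc v * (d + 1) * (2 * l + d + 1) * (8 * l + 2) ^ 2 * 9.87
        ≤ 2.5 * (l + 1) * (κ * v) * (8 * l + 2) ^ 2 * 9.87 := by gcongr
      _ = 2.5 * (l + 1) * 9.87 * (κ * v * (8 * l + 2) ^ 2) := by ring
      _ ≤ 2.5 * (l + 1) * 9.87 * (0.79 * (l + 1) * (8 * l + 1) ^ 2) := by gcongr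
      _ = 19.49325 * (((l : ℝ) + 1) ^ 2 * (8 * l + 1) ^ 2) := by ring
      _ < 19.7136 * (((l : ℝ) + 1) ^ 2 * (8 * l + 1) ^ 2) := by gcongr; norm_num
      _ = _ := by ring
  · have hd' : d = 0 ∨ d = 2 := by
      obtain ⟨r, hr⟩ := hd; omega
    rcases hd' with rfl | rfl
    · obtain ⟨t, ht⟩ : ∃ t : ℝ, (l:ℝ) = 1 + t := ⟨l - 1, by ring⟩
      have ht0 : 0 ≤ t := by linarith
      have : v * (2 * l + 1) * (8 * l + 2) ^ 2 * 9.87 ≤ 1 * (2 * l + 1) * (8 * l + 2) ^ 2 * 9.87 := by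
        gcongr
      push_cast
      refine lt_of_le_of_lt (le_trans (le_of_eq (by ring)) this) ?_
      rw [ht, ← sub_pos]
      ring_nf
      positivity
    · by_cases hl3 : 3 ≤ l
      · have hl3' : (3 : ℝ) ≤ l := by exact_mod_cast hl3
        obtain ⟨t, ht⟩ : ∃ t : ℝ, (l:ℝ) = 3 + t := ⟨l - 3, by ring⟩
        have ht0 : 0 ≤ t := by linarith
        have : v * (2 + 1) * (2 * l + 2 + 1) * (8 * l + 2) ^ 2 * 9.87 ≤ 1 * (2 + 1) * (2 * l + 2 + 1) * (8 * l + 2) ^ 2 * 9.87 := by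
          gcongr
        push_cast
        refine lt_of_le_of_lt this ?_
        rw [ht, ← sub_pos]
        ring_nf
        positivity
      · have : l = 1 ∨ l = 2 := by omega
        rcases this with rfl | rfl
        · norm_num at hκ h ⊢
          subst hκ
          by_contra hc
          have hv2 : 0.42 ≤ v := by linarith
          have hx2 : x ≤ 0.8 := by nlinarith
          nlinarith
        · norm_num at hκ h ⊢
          subst hκ
          by_contra hc
          have hv2 : 0.7 ≤ v := by linarith
          have hx2 : x ≤ 0.6 := by nlinarith
          nlinarith

theorem low_odd (l d : ℕ) (v x κ : ℝ) (hl : 1 ≤ l) (hd : Odd d) (hx : 0 ≤ x) (hx1 : x < 1)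
    (hv : v = 1 - x ^ 2)
    (hκ : κ = d * (2 * l + d + 1) / (2 * (l + 1)))
    (h : κ * v * (1 + κ * v / (2 * (l + 2))) ≤ l * x) :
    v * (8 * l + 2) ^ 2 * (d * (2 * l + d + 1) + l + 1 / 2) ^ 2 * (2 * l + d + 2) * 9.87
      < 19.7136 * ((l : ℝ) + 1) ^ 2 * (8 * l + 1) ^ 2 * (2 * l + d + 1) ^ 2 * d := by
  have hv0 : 0 < v := by rw [hv]; nlinarith
  have hv1 : v ≤ 1 := by rw [hv]; nlinarith
  have hl' : (1 : ℝ) ≤ l := by exact_mod_cast hl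
  by_cases h4 : 5 ≤ d
  · have hd4 : (5 : ℝ) ≤ d := by exact_mod_cast h4
    have hk := k_bound l (κ * v) hl' (by rw [hκ]; positivity) (by nlinarith)
    have e : d * (2 * l + d + 1) * v = 2 * (l + 1) * (κ * v) := by rw [hκ]; field_simp
    obtain ⟨a, ha⟩ : ∃ a : ℝ, a = 2 * l + d + 1 := ⟨_, rfl⟩
    rw [← ha] at e ⊢
    have ha1 : 2 * (l:ℝ) + d + 2 = a + 1 := by rw [ha]; ring
    rw [ha1]
    have ha8 : 8 ≤ a := by linarith
    have hb : d * a + l + 1 / 2 ≤ d * (1.1 * a - 0.5) := by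
      have : 0 ≤ (d - 5 : ℝ) * (a - 5) := mul_nonneg (by linarith) (by linarith)
      nlinarith
    have hR : (d * a + l + 1 / 2) ^ 2 * (a + 1) ≤ 1.26 * a ^ 3 * d ^ 2 := by
      calc (d * a + l + 1 / 2) ^ 2 * (a + 1) ≤ (d * (1.1 * a - 0.5)) ^ 2 * (a + 1) := by gcongr
        _ = d ^ 2 * (1.21 * a ^ 3 + 0.11 * a ^ 2 - 0.85 * a + 0.25) := by ring
        _ ≤ d ^ 2 * (1.26 * a ^ 3) := by
          gcongr
          nlinarith [mul_nonneg (sq_nonneg a) (by linarith : 0 ≤ a - 8)]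
        _ = _ := by ring
    have had : 0 < a * d := by positivity
    refine lt_of_mul_lt_mul_right ?_ had.le
    calc v * (8 * l + 2) ^ 2 * (d * a + l + 1 / 2) ^ 2 * (a + 1) * 9.87 * (a * d)
        = (d * a * v) * (8 * l + 2) ^ 2 * ((d * a + l + 1 / 2) ^ 2 * (a + 1)) * 9.87 := by ring
      _ = 2 * (l + 1) * (κ * v * (8 * l + 2) ^ 2) * ((d * a + l + 1 / 2) ^ 2 * (a + 1)) * 9.87 := by
          rw [e]; ring
      _ ≤ 2 * (l + 1) * (0.79 * (l + 1) * (8 * l + 1) ^ 2) * (1.26 * a ^ 3 * d ^ 2) * 9.87 := by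
          gcongr
      _ = (2 * 0.79 * 1.26 * 9.87) * (((l:ℝ) + 1) ^ 2 * (8 * l + 1) ^ 2 * a ^ 3 * d ^ 2) := by ring
      _ < 19.7136 * (((l:ℝ) + 1) ^ 2 * (8 * l + 1) ^ 2 * a ^ 3 * d ^ 2) := by
          gcongr; norm_num
      _ = _ := by ring
  · have hd' : d = 1 ∨ d = 3 := by
      obtain ⟨r, hr⟩ := hd; omega
    rcases hd' with rfl | rfl
    · by_cases hl3 : 2 ≤ l
      · have hl3' : (2 : ℝ) ≤ l := by exact_mod_cast hl3
        obtain ⟨t, ht⟩ : ∃ t : ℝ, (l:ℝ) = 2 + t := ⟨l - 2, by ring⟩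
        have ht0 : 0 ≤ t := by linarith
        push_cast
        have : v * ((8 * l + 2) ^ 2 * (1 * (2 * l + 1 + 1) + l + 1 / 2) ^ 2 * (2 * l + 1 + 2) * 9.87)
          ≤ 1 * ((8 * l + 2) ^ 2 * (1 * (2 * l + 1 + 1) + l + 1 / 2) ^ 2 * (2 * l + 1 + 2) * 9.87) := by
          gcongr
        refine lt_of_le_of_lt (le_trans (le_of_eq (by ring)) this) ?_
        rw [ht, ← sub_pos]
        ring_nf
        positivity
      · have : l = 1 := by omega
        subst this
        norm_num at hκ h ⊢
        subst hκ
        by_contra hc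
        have hv2 : 0.65 ≤ v := by linarith
        have hx2 : x ≤ 0.6 := by nlinarith
        nlinarith
    · by_cases hl3 : 5 ≤ l
      · have hl3' : (5 : ℝ) ≤ l := by exact_mod_cast hl3
        obtain ⟨t, ht⟩ : ∃ t : ℝ, (l:ℝ) = 5 + t := ⟨l - 5, by ring⟩
        have ht0 : 0 ≤ t := by linarith
        push_cast
        have : v * ((8 * l + 2) ^ 2 * (3 * (2 * l + 3 + 1) + l + 1 / 2) ^ 2 * (2 * l + 3 + 2) * 9.87)
          ≤ 1 * ((8 * l + 2) ^ 2 * (3 * (2 * l + 3 + 1) + l + 1 / 2) ^ 2 * (2 * l + 3 + 2) * 9.87) := by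
          gcongr
        refine lt_of_le_of_lt (le_trans (le_of_eq (by ring)) this) ?_
        rw [ht, ← sub_pos]
        ring_nf
        positivity
      · have : l = 1 ∨ l = 2 ∨ l = 3 ∨ l = 4 := by omega
        rcases this with rfl | rfl | rfl | rfl
        · norm_num at hκ h ⊢
          subst hκ
          by_contra hc
          have hv2 : 0.25 ≤ v := by linarith
          have hx2 : x ≤ 0.9 := by nlinarith
          nlinarith
        · norm_num at hκ h ⊢
          subst hκ
          by_contra hc
          have hv2 : 0.4 ≤ v := by linarith
          have hx2 : x ≤ 0.8 := by nlinarith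
          nlinarith
        · norm_num at hκ h ⊢
          subst hκ
          by_contra hc
          have hv2 : 0.6 ≤ v := by linarith
          have hx2 : x ≤ 0.7 := by nlinarith
          nlinarith
        · norm_num at hκ h ⊢
          subst hκ
          by_contra hc
          have hv2 : 0.8 ≤ v := by linarith
          have hx2 : x ≤ 0.5 := by nlinarith
          nlinarith

theorem pi_sq_lt : π ^ 2 < 9.87 := by
  have := Real.pi_lt_d4
  have := Real.pi_pos
  nlinarith

theorem fin_even (l d j k : ℕ) (hl : 1 ≤ l) (hj : 2 * l + d = 2 * j) (hk : d = 2 * k)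
    (x κ V : ℝ) (hx : 0 ≤ x) (hx1 : x < 1) (hV : 0 ≤ V)
    (hκ : κ = d * (2 * l + d + 1) / (2 * (l + 1)))
    (h : κ * (1 - x ^ 2) * (1 + κ * (1 - x ^ 2) / (2 * (l + 2))) ≤ l * x)
    (hS : cbin j * cbin k ≤ √(1 - x ^ 2) * V * ((8 * l + 2) / (8 * l + 1))) :
    1 / (2.22 * ((l : ℝ) + 1)) < V := by
  by_contra hc
  push Not at hc
  have hn := low_even l d (1 - x ^ 2) x κ hl ⟨k, by omega⟩ hx hx1 rfl hκ h
  have hv0 : 0 < 1 - x ^ 2 := by nlinarith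
  have e1 : (2 * l + d + 1 : ℝ) = 2 * j + 1 := by exact_mod_cast congrArg (· + 1) hj
  have e2 : (d + 1 : ℝ) = 2 * k + 1 := by rw [hk]; push_cast; ring
  rw [e1, e2] at hn
  have c1 := cbin_lower j
  have c2 := cbin_lower k
  have p1 := cbin_pos j
  have p2 := cbin_pos k
  have hS2 : cbin j * cbin k ≤
      √(1 - x ^ 2) * (1 / (2.22 * ((l : ℝ) + 1))) * ((8 * l + 2) / (8 * l + 1)) :=
    hS.trans (by gcongr)
  have hS3 : (cbin j * cbin k) ^ 2 ≤
      (√(1 - x ^ 2) * (1 / (2.22 * ((l : ℝ) + 1))) * ((8 * l + 2) / (8 * l + 1))) ^ 2 := by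
    gcongr
  rw [mul_pow (√(1 - x ^ 2) * _), mul_pow (√(1 - x ^ 2)), sq_sqrt hv0.le, div_pow, div_pow, one_pow,
    show (1 - x ^ 2) * (1 / (2.22 * ((l : ℝ) + 1)) ^ 2) * ((8 * l + 2) ^ 2 / (8 * l + 1) ^ 2)
      = (1 - x ^ 2) * (8 * l + 2) ^ 2 / ((2.22 * ((l : ℝ) + 1)) ^ 2 * (8 * l + 1) ^ 2) by
        field_simp, le_div_iff₀ (by positivity)] at hS3
  have c3 : 4 ≤ π ^ 2 * (cbin j * cbin k) ^ 2 * ((2 * j + 1) * (2 * k + 1)) := by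
    calc (4 : ℝ) = 2 * 2 := by norm_num
      _ ≤ (π * cbin j ^ 2 * (2 * j + 1)) * (π * cbin k ^ 2 * (2 * k + 1)) := by gcongr
      _ = _ := by ring
  have : 4 * ((2.22 * ((l : ℝ) + 1)) ^ 2 * (8 * l + 1) ^ 2) <
      4 * ((2.22 * ((l : ℝ) + 1)) ^ 2 * (8 * l + 1) ^ 2) := by
    calc 4 * ((2.22 * ((l : ℝ) + 1)) ^ 2 * (8 * l + 1) ^ 2)
        ≤ (π ^ 2 * (cbin j * cbin k) ^ 2 * ((2 * j + 1) * (2 * k + 1))) *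
          ((2.22 * ((l : ℝ) + 1)) ^ 2 * (8 * l + 1) ^ 2) := by gcongr
      _ = π ^ 2 * ((2 * j + 1) * (2 * k + 1)) * ((cbin j * cbin k) ^ 2 *
          ((2.22 * ((l : ℝ) + 1)) ^ 2 * (8 * l + 1) ^ 2)) := by ring
      _ ≤ 9.87 * ((2 * j + 1) * (2 * k + 1)) * ((1 - x ^ 2) * (8 * l + 2) ^ 2) := by
          have := pi_sq_lt
          gcongr
      _ = (1 - x ^ 2) * (2 * k + 1) * (2 * j + 1) * (8 * l + 2) ^ 2 * 9.87 := by ring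
      _ < _ := hn
      _ = _ := by ring
  exact lt_irrefl _ this

theorem fin_odd (l d j k : ℕ) (hl : 1 ≤ l) (hj : 2 * l + d + 1 = 2 * j) (hk : d = 2 * k + 1)
    (x κ V : ℝ) (hx : 0 ≤ x) (hx1 : x < 1) (hV : 0 ≤ V)
    (hκ : κ = d * (2 * l + d + 1) / (2 * (l + 1)))
    (h : κ * (1 - x ^ 2) * (1 + κ * (1 - x ^ 2) / (2 * (l + 2))) ≤ l * x)
    (hS : 2 * j * (2 * k + 1) * (cbin j * cbin k) / (d * (2 * l + d + 1) + l + 1 / 2) ≤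
      √(1 - x ^ 2) * V * ((8 * l + 2) / (8 * l + 1))) :
    1 / (2.22 * ((l : ℝ) + 1)) < V := by
  by_contra hc
  push Not at hc
  have hn := low_odd l d (1 - x ^ 2) x κ hl ⟨k, by omega⟩ hx hx1 rfl hκ h
  have hv0 : 0 < 1 - x ^ 2 := by nlinarith
  have e1 : (2 * l + d + 1 : ℝ) = 2 * j := by exact_mod_cast hj
  have e3 : (2 * l + d + 2 : ℝ) = 2 * j + 1 := by linarith
  have e2 : (d : ℝ) = 2 * k + 1 := by rw [hk]; push_cast; ring
  rw [e3] at hn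
  rw [e1, e2] at hn hS
  have c1 := cbin_lower j
  have c2 := cbin_lower k
  have p1 := cbin_pos j
  have p2 := cbin_pos k
  set D : ℝ := (2 * k + 1) * (2 * j) + l + 1 / 2 with hD
  have hD0 : 0 < D := by positivity
  have hS2 : 2 * j * (2 * k + 1) * (cbin j * cbin k) / D ≤
      √(1 - x ^ 2) * (1 / (2.22 * ((l : ℝ) + 1))) * ((8 * l + 2) / (8 * l + 1)) :=
    hS.trans (by gcongr)
  have hS3 : (2 * j * (2 * k + 1) * (cbin j * cbin k) / D) ^ 2 ≤
      (√(1 - x ^ 2) * (1 / (2.22 * ((l : ℝ) + 1))) * ((8 * l + 2) / (8 * l + 1))) ^ 2 := by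
    gcongr
  rw [mul_pow (√(1 - x ^ 2) * _), mul_pow (√(1 - x ^ 2)), sq_sqrt hv0.le, div_pow, div_pow,
    div_pow, one_pow,
    show (1 - x ^ 2) * (1 / (2.22 * ((l : ℝ) + 1)) ^ 2) * ((8 * l + 2) ^ 2 / (8 * l + 1) ^ 2)
      = (1 - x ^ 2) * (8 * l + 2) ^ 2 / ((2.22 * ((l : ℝ) + 1)) ^ 2 * (8 * l + 1) ^ 2) by
        field_simp, div_le_div_iff₀ (by positivity) (by positivity)] at hS3
  have c3 : 4 ≤ π ^ 2 * (cbin j * cbin k) ^ 2 * ((2 * j + 1) * (2 * k + 1)) := by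
    calc (4 : ℝ) = 2 * 2 := by norm_num
      _ ≤ (π * cbin j ^ 2 * (2 * j + 1)) * (π * cbin k ^ 2 * (2 * k + 1)) := by gcongr
      _ = _ := by ring
  have : 4 * ((2.22 * ((l : ℝ) + 1)) ^ 2 * (8 * l + 1) ^ 2 * (2 * j) ^ 2 * (2 * k + 1)) <
      4 * ((2.22 * ((l : ℝ) + 1)) ^ 2 * (8 * l + 1) ^ 2 * (2 * j) ^ 2 * (2 * k + 1)) := by
    calc 4 * ((2.22 * ((l : ℝ) + 1)) ^ 2 * (8 * l + 1) ^ 2 * (2 * j) ^ 2 * (2 * k + 1))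
        ≤ (π ^ 2 * (cbin j * cbin k) ^ 2 * ((2 * j + 1) * (2 * k + 1))) *
          ((2.22 * ((l : ℝ) + 1)) ^ 2 * (8 * l + 1) ^ 2 * (2 * j) ^ 2 * (2 * k + 1)) := by gcongr
      _ = π ^ 2 * (2 * j + 1) * ((2 * j * (2 * k + 1) * (cbin j * cbin k)) ^ 2 *
          ((2.22 * ((l : ℝ) + 1)) ^ 2 * (8 * l + 1) ^ 2)) := by ring
      _ ≤ 9.87 * (2 * j + 1) * ((1 - x ^ 2) * (8 * l + 2) ^ 2 * D ^ 2) := by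
          have := pi_sq_lt
          gcongr
      _ = (1 - x ^ 2) * (8 * l + 2) ^ 2 * D ^ 2 * (2 * j + 1) * 9.87 := by ring
      _ < _ := hn
      _ = _ := by ring
  exact lt_irrefl _ this

theorem B_even (l d j k : ℕ) (hl : 1 ≤ l) (hj : 2 * l + d = 2 * j) (hk : d = 2 * k) :
    (√(d * (2 * l + d + 1) + l) * (cbin j * cbin k)) ^ 2 * π ^ 3 < 32 := by
  rw [mul_pow, sq_sqrt (by positivity)]
  have e1 : (2 * l + d : ℝ) = 2 * j := by exact_mod_cast hj
  have e2 : (d : ℝ) = 2 * k := by rw [hk]; push_cast; ring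
  have e3 : (d * (2 * l + d + 1) + l : ℝ) = 4 * j * k + j + k := by
    have : (l : ℝ) = j - k := by linarith
    rw [e1, e2, this]; ring
  rw [e3]
  have hn := up_even j k (by positivity) (by positivity)
  have c1 := cbin_upper j
  have c2 := cbin_upper k
  have p1 := cbin_pos j
  have p2 := cbin_pos k
  have hpi : π < 3.2 := Real.pi_lt_d2.trans (by norm_num)
  refine lt_of_mul_lt_mul_right (a := ((2 * j + 1 : ℝ) ^ 2 * (2 * k + 1) ^ 2)) ?_ (by positivity)
  calc (4 * j * k + j + k : ℝ) * (cbin j * cbin k) ^ 2 * π ^ 3 * ((2 * j + 1) ^ 2 * (2 * k + 1) ^ 2)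
      = (4 * j * k + j + k : ℝ) * π *
        ((π * cbin j ^ 2 * (2 * j + 1) ^ 2) * (π * cbin k ^ 2 * (2 * k + 1) ^ 2)) := by ring
    _ ≤ (4 * j * k + j + k : ℝ) * 3.2 * ((4 * (j + 1)) * (4 * (k + 1))) := by gcongr
    _ = 16 * ((4 * j * k + j + k) * (j + 1) * (k + 1) * 3.2) := by ring
    _ < 16 * (2 * (2 * j + 1) ^ 2 * (2 * k + 1) ^ 2) := by gcongr
    _ = _ := by ring

theorem B_odd (l d j k : ℕ) (hl : 1 ≤ l) (hj : 2 * l + d + 1 = 2 * j) (hk : d = 2 * k + 1) :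
    (2 * j * (2 * k + 1) * (cbin j * cbin k) / √(d * (2 * l + d + 1) + l)) ^ 2 * π ^ 3 < 32 := by
  rw [div_pow, sq_sqrt (by positivity)]
  have e1 : (2 * l + d + 1 : ℝ) = 2 * j := by exact_mod_cast hj
  have e2 : (d : ℝ) = 2 * k + 1 := by rw [hk]; push_cast; ring
  have e3 : (d * (2 * l + d + 1) + l : ℝ) = 4 * j * k + 3 * j - k - 1 := by
    have : (l : ℝ) = j - k - 1 := by linarith
    rw [e1, e2, this]; ring
  have hD : (0:ℝ) < d * (2 * l + d + 1) + l := by positivity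
  rw [e3] at hD ⊢
  have hjk : (k : ℝ) + 2 ≤ j := by
    have : k + 2 ≤ j := by omega
    exact_mod_cast this
  have hn := up_odd j k hjk (by positivity)
  have c1 := cbin_upper j
  have c2 := cbin_upper k
  have p1 := cbin_pos j
  have p2 := cbin_pos k
  have hpi : π < 3.2 := Real.pi_lt_d2.trans (by norm_num)
  set D : ℝ := 4 * j * k + 3 * j - k - 1
  rw [div_mul_eq_mul_div, div_lt_iff₀ hD]
  refine lt_of_mul_lt_mul_right (a := ((2 * j + 1 : ℝ) ^ 2)) ?_ (by positivity)
  calc (2 * j * (2 * k + 1) * (cbin j * cbin k)) ^ 2 * π ^ 3 * (2 * j + 1 : ℝ) ^ 2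
      = 4 * (j : ℝ) ^ 2 * π *
        ((π * cbin j ^ 2 * (2 * j + 1) ^ 2) * (π * cbin k ^ 2 * (2 * k + 1) ^ 2)) := by ring
    _ ≤ 4 * (j : ℝ) ^ 2 * 3.2 * ((4 * (j + 1)) * (4 * (k + 1))) := by gcongr
    _ = 32 * (2 * 3.2 * (j : ℝ) ^ 2 * (j + 1) * (k + 1)) := by ring
    _ < 32 * ((2 * j + 1) ^ 2 * D) := by gcongr
    _ = _ := by ring

theorem up_any (u u1 u2 : ℝ → ℝ) (l : ℕ) (hl : 1 ≤ l) (A : ℝ) (hA : 0 ≤ A)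
    (h1 : ∀ x, HasDerivAt u (u1 x) x)
    (h2 : ∀ x, HasDerivAt u1 (u2 x) x)
    (ode : ∀ x, (1 - x ^ 2) * u2 x - 2 * (l + 1) * x * u1 x + A * u x = 0) :
    ∃ V0, 0 ≤ V0 ∧ (∀ x ∈ Set.Icc (-1 : ℝ) 1, (1 - x ^ 2) ^ l * u x ^ 2 ≤ V0) ∧
    √l * V0 ≤ √(A + l) * u 0 ^ 2 + u1 0 ^ 2 / √(A + l) := by
  have cu : Continuous u := continuous_iff_continuousAt.2 fun x => (h1 x).continuousAt
  obtain ⟨x0, hx0, hm⟩ := (isCompact_Icc (a := (-1:ℝ)) (b := 1)).exists_isMaxOn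
      ⟨0, by norm_num, by norm_num⟩ (f := fun x => (1 - x ^ 2) ^ l * u x ^ 2) (by fun_prop)
  have hm' : ∀ x ∈ Set.Icc (-1:ℝ) 1, (1 - x ^ 2) ^ l * u x ^ 2 ≤ (1 - x0 ^ 2) ^ l * u x0 ^ 2 :=
    fun x hx => hm hx
  have hv : 0 ≤ 1 - x0 ^ 2 := by nlinarith [hx0.1, hx0.2]
  refine ⟨(1 - x0 ^ 2) ^ l * u x0 ^ 2, by positivity, hm', ?_⟩
  by_cases hz : (1 - x0 ^ 2) ^ l * u x0 ^ 2 = 0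
  · rw [hz, mul_zero]; positivity
  have hu0 : u x0 ≠ 0 := by
    intro h; apply hz; rw [h]; simp
  have hv' : 1 - x0 ^ 2 ≠ 0 := by
    intro h; apply hz; rw [h]; simp; left; omega
  have hvp : 0 < 1 - x0 ^ 2 := lt_of_le_of_ne hv hv'.symm
  rcases le_or_gt 0 x0 with h | h
  · exact up_core u u1 u2 l hl A hA h1 h2 ode x0 h (by nlinarith) hu0 hm'
  · have hneg : ∀ (f f' : ℝ → ℝ), (∀ x, HasDerivAt f (f' x) x) →
        ∀ x, HasDerivAt (fun x => f (-x)) (-f' (-x)) x := by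
      intro f f' hf x
      have := (hf (-x)).comp x (hasDerivAt_neg x)
      exact this.congr_deriv (by ring)
    have := up_core (fun x => u (-x)) (fun x => - u1 (-x)) (fun x => u2 (-x)) l hl A hA
      (hneg _ _ h1) (fun x => (hneg _ _ h2 x).neg.congr_deriv (neg_neg _))
      (fun x => by have := ode (-x); simp only [neg_sq] at this; linarith) (-x0) (by linarith)
      (by nlinarith) (by simpa using hu0)
      (fun x hx => by
        have := hm' (-x) ⟨by linarith [hx.2], by linarith [hx.1]⟩
        simpa using this)
    simpa using this

/-- **Lohöfer's bounds.** For integers `1 ≤ l ≤ m`,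
`1/√(2.22(l+1)) < max_{x∈[−1,1]} |√((m−l)!/(m+l)!) P_m^l(x)| < 2^{5/4} π^{−3/4} l^{−1/4}`. -/
theorem lohoefer_bounds (m l : ℕ) (hl : 1 ≤ l) (hlm : l ≤ m) :
    1 / Real.sqrt (2.22 * ((l : ℝ) + 1)) <
      (⨆ x : Set.Icc (-1 : ℝ) 1,
        |Real.sqrt (((m - l).factorial : ℝ) / ((m + l).factorial : ℝ)) *
          assocLegendreP m l (x : ℝ)|) ∧
    (⨆ x : Set.Icc (-1 : ℝ) 1,
        |Real.sqrt (((m - l).factorial : ℝ) / ((m + l).factorial : ℝ)) *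
          assocLegendreP m l (x : ℝ)|) <
      2 ^ ((5 : ℝ) / 4) * π ^ (-(3 : ℝ) / 4) * (l : ℝ) ^ (-(1 : ℝ) / 4) := by
  obtain ⟨u, u1, u2, h1, h2, ode, hu, hY, hev, hod⟩ := legendre_data m l hlm
  simp only [hY]
  obtain ⟨d, rfl⟩ := Nat.exists_eq_add_of_le hlm
  have hl' : (1 : ℝ) ≤ l := by exact_mod_cast hl
  obtain ⟨A, hAd⟩ : ∃ A : ℝ, A = d * (2 * l + d + 1) := ⟨_, rfl⟩
  have hA : 0 ≤ A := by rw [hAd]; positivity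
  have ode' : ∀ x, (1 - x ^ 2) * u2 x - 2 * (l + 1) * x * u1 x + A * u x = 0 := by
    intro x
    have := ode x
    push_cast at this
    rw [hAd]
    linarith
  rw [show l + d - l = d by omega, show l + d + l = 2 * l + d by ring] at hev hod
  obtain ⟨V0, hV0, hV, hB⟩ := up_any u u1 u2 l hl A hA h1 h2 ode'
  have habs : ∀ x ∈ Set.Icc (-1 : ℝ) 1, |√(1 - x ^ 2) ^ l * u x| = √((1 - x ^ 2) ^ l * u x ^ 2) := by
    intro x hx
    rw [← sq_Y l x (by nlinarith [hx.1, hx.2]), sqrt_sq_eq_abs]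
  have hle : ∀ x : Set.Icc (-1 : ℝ) 1, |√(1 - (x:ℝ) ^ 2) ^ l * u x| ≤ √V0 := by
    intro x
    rw [habs x x.2]
    exact sqrt_le_sqrt (hV x x.2)
  constructor
  · obtain ⟨x0, h0, hx1, hk, hS⟩ := low_core u u1 u2 l hl A hA h1 h2 ode' hu _ rfl
    have hx0m : x0 ∈ Set.Icc (-1 : ℝ) 1 := ⟨by linarith, hx1.le⟩
    have hv0 : 0 < 1 - x0 ^ 2 := by nlinarith
    have key : 1 / (2.22 * ((l : ℝ) + 1)) < (1 - x0 ^ 2) ^ l * u x0 ^ 2 := by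
      rcases Nat.even_or_odd' d with ⟨k, hk' | hk'⟩
      · obtain ⟨a, b⟩ := hev (l + k) k (by omega) hk'
        refine fin_even l d (l + k) k hl (by omega) hk' x0 _ _ h0 hx1 (by positivity)
          (by rw [hAd]) hk ?_
        rw [a, b] at hS
        simpa using hS
      · obtain ⟨a, b⟩ := hod (l + k + 1) k (by omega) hk'
        refine fin_odd l d (l + k + 1) k hl (by omega) hk' x0 _ _ h0 hx1 (by positivity)
          (by rw [hAd]) hk ?_
        rw [a, b] at hS
        rw [← hAd]
        simpa using hS
    have hbd : BddAbove (Set.range fun x : Set.Icc (-1 : ℝ) 1 =>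
        |√(1 - (x:ℝ) ^ 2) ^ l * u x|) := ⟨√V0, by rintro _ ⟨x, rfl⟩; exact hle x⟩
    refine lt_of_lt_of_le ?_ (le_ciSup hbd ⟨x0, hx0m⟩)
    rw [habs x0 hx0m]
    have : 1 / √(2.22 * ((l : ℝ) + 1)) = √(1 / (2.22 * ((l : ℝ) + 1))) := by
      rw [sqrt_div zero_le_one, sqrt_one]
    rw [this]
    exact sqrt_lt_sqrt (by positivity) key
  · have : Nonempty (Set.Icc (-1 : ℝ) 1) := ⟨⟨0, by norm_num, by norm_num⟩⟩
    refine lt_of_le_of_lt (ciSup_le hle) ?_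
    have hB2 : (√(A + l) * u 0 ^ 2 + u1 0 ^ 2 / √(A + l)) ^ 2 * π ^ 3 < 32 := by
      rcases Nat.even_or_odd' d with ⟨k, hk' | hk'⟩
      · obtain ⟨a, b⟩ := hev (l + k) k (by omega) hk'
        have := B_even l d (l + k) k hl (by omega) hk'
        rw [← hAd] at this
        rw [a, b]
        simpa using this
      · obtain ⟨a, b⟩ := hod (l + k + 1) k (by omega) hk'
        have := B_odd l d (l + k + 1) k hl (by omega) hk'
        rw [← hAd] at this
        rw [a, b]
        simpa using this
    have hVV : (√l * V0) ^ 2 * π ^ 3 < 32 := by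
      refine lt_of_le_of_lt ?_ hB2
      have := pi_pos
      gcongr
    rw [mul_pow, sq_sqrt (by positivity)] at hVV
    have hpi := pi_pos
    refine lt_of_pow_lt_pow_left₀ 4 (by positivity) ?_
    have e1 : √V0 ^ 4 = V0 ^ 2 := by
      rw [show 4 = 2 * 2 by norm_num, pow_mul, sq_sqrt hV0]
    have e2 : ∀ (a b : ℝ), 0 ≤ a → (a ^ (b / 4)) ^ 4 = a ^ b := by
      intro a b ha
      rw [← rpow_natCast, ← rpow_mul ha]
      congr 1; push_cast; ring
    rw [e1, mul_pow, mul_pow, e2 _ _ (by norm_num), e2 _ _ hpi.le, e2 _ _ (by positivity),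
      rpow_neg hpi.le, rpow_neg (by positivity), rpow_one]
    have e3 : (2 : ℝ) ^ (5 : ℝ) = 32 := by norm_num
    have e4 : π ^ (3 : ℝ) = π ^ 3 := by exact_mod_cast rpow_natCast π 3
    rw [e3, e4, ← div_eq_mul_inv, ← div_eq_mul_inv, lt_div_iff₀ (by positivity),
      lt_div_iff₀ (by positivity)]
    linarith
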